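/- arXiv:alg-geom/9510014 — 3 statements merged into one kernel-verified Lean document; each statement's English description precedes it below -/
import Mathlib

section
/- Let Λ ⊂ ℝ^k be a full-dimensional finitely generated rational polyhedral cone with Λ ∩ (−Λ) = {0}. Then X_Λ(s) is a rational function P(s)/Q(s), where Q is the product of linear homogeneous forms defining the codimension-1 faces of Λ, P is a homogeneous polynomial, and deg P − deg Q = −k. -/
open MeasureTheory

/-- The dual cone of a cone `Λ ⊆ ℝ^k` (with respect to the standard pairing). -/
def dualCone {k : ℕ} (Λ : Set (Fin k → ℝ)) : Set (Fin k → ℝ) :=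
  {y | ∀ x ∈ Λ, 0 ≤ ∑ i, x i * y i}

/-- The X-function of a cone: `X_Λ(s) = ∫_{Λ*} e^{-⟨s,y⟩} dy`. -/
noncomputable def XFun {k : ℕ} (Λ : Set (Fin k → ℝ)) (s : Fin k → ℂ) : ℂ :=
  ∫ y in dualCone Λ, Complex.exp (-∑ i, s i * (y i : ℂ))

/-- The cone spanned by the vectors `W i`, `i ∈ B`. -/
def subCone {k : ℕ} {ι : Type} [Fintype ι] (W : ι → Fin k → ℝ) (B : Finset ι) :
    Set (Fin k → ℝ) :=
  {y | ∃ c : ι → ℝ, (∀ i, 0 ≤ c i) ∧ (∀ i, i ∉ B → c i = 0) ∧ y = ∑ i, c i • W i}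

theorem simplicial_integral {k : ℕ} {ι : Type} [Fintype ι]
    (b : Module.Basis ι ℝ (Fin k → ℝ)) :
    ∃ D : ℝ, ∀ s : Fin k → ℂ, (∀ i, 0 < ∑ j, (s j).re * b i j) →
      IntegrableOn (fun y : Fin k → ℝ => Complex.exp (-∑ i, s i * (y i : ℂ)))
        {y | ∀ i, 0 ≤ b.repr y i} ∧
      ∫ y in {y | ∀ i, 0 ≤ b.repr y i}, Complex.exp (-∑ i, s i * (y i : ℂ))
        = D / ∏ i, ∑ j, (b i j : ℂ) * s j := by
  classical
  let φ : (Fin k → ℝ) ≃L[ℝ] (ι → ℝ) := b.equivFun.toContinuousLinearEquiv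
  have hφ : ∀ y, φ y = b.repr y := fun y => rfl
  let ν : Measure (Fin k → ℝ) := (volume : Measure (ι → ℝ)).map φ.symm
  have : ν.IsAddHaarMeasure := φ.symm.isAddHaarMeasure_map _
  have hvol : (volume : Measure (Fin k → ℝ)) =
      Measure.addHaarScalarFactor volume ν • ν := Measure.isAddLeftInvariant_eq_smul _ _
  set D := Measure.addHaarScalarFactor (volume : Measure (Fin k → ℝ)) ν with hD
  refine ⟨(D : ℝ), fun s hs => ?_⟩
  set f : (Fin k → ℝ) → ℂ := fun y => Complex.exp (-∑ i, s i * (y i : ℂ)) with hf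
  have hfc : Continuous f := by fun_prop
  let A : Set (Fin k → ℝ) := {y | ∀ i, 0 ≤ b.repr y i}
  have hA : A = φ ⁻¹' (Set.univ.pi fun _ => Set.Ici 0) := by
    ext y; simp [A, hφ, Pi.le_def]
  have hAm : MeasurableSet A := by
    rw [hA]
    exact φ.continuous.measurable (MeasurableSet.univ_pi fun _ => measurableSet_Ici)
  let a : ι → ℂ := fun i => ∑ j, (b i j : ℂ) * s j
  have ha : ∀ i, (-a i).re < 0 := by
    intro i
    have := hs i
    simp only [a, Complex.neg_re, Complex.re_sum, Complex.re_ofReal_mul]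
    have h2 : ∑ j, b i j * (s j).re = ∑ j, (s j).re * b i j :=
      Finset.sum_congr rfl fun j _ => mul_comm _ _
    rw [h2]; linarith
  let F : ι → ℝ → ℂ := fun i => (Set.Ici (0:ℝ)).indicator fun x => Complex.exp (-a i * x)
  have hFi : ∀ i, Integrable (F i) := by
    intro i
    rw [integrable_indicator_iff measurableSet_Ici, integrableOn_Ici_iff_integrableOn_Ioi]
    exact integrableOn_exp_mul_complex_Ioi (ha i) 0
  have hFint : ∀ i, ∫ x, F i x = 1 / a i := by
    intro i
    rw [integral_indicator measurableSet_Ici, integral_Ici_eq_integral_Ioi,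
      integral_exp_mul_complex_Ioi (ha i) 0]
    simp
  have hcomp : ∀ c : ι → ℝ, A.indicator f (φ.symm c) = ∏ i, F i (c i) := by
    intro c
    by_cases hc : ∀ i, 0 ≤ c i
    · have h1 : φ.symm c ∈ A := by
        rw [hA]; simpa [Pi.le_def] using hc
      rw [Set.indicator_of_mem h1]
      have h2 : ∀ i, F i (c i) = Complex.exp (-a i * c i) := fun i =>
        Set.indicator_of_mem (show c i ∈ Set.Ici (0:ℝ) from hc i) _
      simp only [h2, hf]
      rw [← Complex.exp_sum]
      congr 1
      have h3 : φ.symm c = ∑ i, c i • b i := b.equivFun_symm_apply c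
      rw [h3]
      simp only [Finset.sum_apply, Pi.smul_apply, smul_eq_mul, a, Complex.ofReal_sum,
        Complex.ofReal_mul, neg_mul, Finset.sum_neg_distrib, Finset.mul_sum, Finset.sum_mul]
      rw [Finset.sum_comm]
      congr 1
      refine Finset.sum_congr rfl fun i _ => Finset.sum_congr rfl fun j _ => ?_
      ring
    · have h1 : φ.symm c ∉ A := by
        rw [hA]; simpa [Pi.le_def] using hc
      rw [Set.indicator_of_notMem h1]
      push Not at hc
      obtain ⟨i, hi⟩ := hc
      refine (Finset.prod_eq_zero (Finset.mem_univ i) ?_).symm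
      exact Set.indicator_of_notMem (by simpa using hi) _
  have hFcomp : Integrable (fun c => A.indicator f (φ.symm c)) := by
    simp_rw [hcomp]
    exact Integrable.fintype_prod hFi
  have hme : MeasurableEmbedding φ.symm := φ.symm.toHomeomorph.measurableEmbedding
  have hFcompν : Integrable (A.indicator f) ν := by
    rw [hme.integrable_map_iff]; exact hFcomp
  constructor
  · change IntegrableOn f A
    rw [← integrable_indicator_iff hAm, hvol]
    exact hFcompν.smul_measure_nnreal
  · change ∫ y in A, f y = _
    rw [← integral_indicator hAm, hvol, integral_smul_nnreal_measure, hme.integral_map]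
    simp_rw [hcomp]
    rw [integral_fintype_prod_volume_eq_prod]
    simp_rw [hFint]
    rw [Finset.prod_div_distrib, Finset.prod_const_one, NNReal.smul_def, Complex.real_smul]
    simp only [a]
    ring

theorem exists_pos_step {ι : Type} [Fintype ι] (c ν : ι → ℝ) (hc : ∀ i, 0 ≤ c i)
    (hν : ∀ i, c i = 0 → 0 ≤ ν i) : ∃ t : ℝ, 0 < t ∧ ∀ i, 0 ≤ c i + t * ν i := by
  have h : ∀ᶠ t in nhdsWithin (0:ℝ) (Set.Ioi 0), ∀ i, 0 ≤ c i + t * ν i := by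
    rw [Filter.eventually_all]
    intro i
    rcases (hc i).eq_or_lt with h0 | h0
    · filter_upwards [self_mem_nhdsWithin] with t ht
      rw [← h0, zero_add]
      exact mul_nonneg (le_of_lt ht) (hν i h0.symm)
    · have hcont : Continuous fun t : ℝ => c i + t * ν i := by fun_prop
      have := hcont.tendsto 0
      simp only [zero_mul, add_zero] at this
      filter_upwards [nhdsWithin_le_nhds (this.eventually (lt_mem_nhds h0))] with t ht
      exact le_of_lt ht
  obtain ⟨t, h1, h2⟩ := (h.and self_mem_nhdsWithin).exists
  exact ⟨t, h2, h1⟩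

/-- Existence of minimizers of the linear program. -/
theorem exists_lp_min {k : ℕ} {ι : Type} [Fintype ι] (W : ι → Fin k → ℝ)
    (e : Fin k → ℝ) (he : ∀ i, 0 < e ⬝ᵥ W i) (h : ι → ℝ) (c₀ : ι → ℝ) (hc₀ : ∀ i, 0 ≤ c₀ i) :
    ∃ c : ι → ℝ, (∀ i, 0 ≤ c i) ∧ ∑ i, c i • W i = ∑ i, c₀ i • W i ∧
      ∀ ν : ι → ℝ, ∑ i, ν i • W i = 0 → (∀ i, c i = 0 → 0 ≤ ν i) → 0 ≤ ∑ i, ν i * h i := by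
  let K : Set (ι → ℝ) := {c | (∀ i, 0 ≤ c i) ∧ ∑ i, c i • W i = ∑ i, c₀ i • W i}
  have hKc : IsClosed K := by
    apply IsClosed.inter
    · have : {c : ι → ℝ | ∀ i, 0 ≤ c i} = ⋂ i, {c | 0 ≤ c i} := by ext; simp
      change IsClosed {c : ι → ℝ | ∀ i, 0 ≤ c i}
      rw [this]
      exact isClosed_iInter fun i => isClosed_le continuous_const (continuous_apply i)
    · exact isClosed_eq (by fun_prop) continuous_const
  have hK : IsCompact K := by
    refine (isCompact_univ_pi (fun i => isCompact_Icc (a := (0:ℝ))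
      (b := (e ⬝ᵥ ∑ i, c₀ i • W i) / (e ⬝ᵥ W i)))).of_isClosed_subset hKc ?_
    intro c hc i _
    refine ⟨hc.1 i, ?_⟩
    rw [le_div_iff₀ (he i), ← hc.2, dotProduct_sum]
    simp only [dotProduct_smul, smul_eq_mul]
    exact Finset.single_le_sum (f := fun i => c i * e ⬝ᵥ W i)
      (fun j _ => mul_nonneg (hc.1 j) (he j).le) (Finset.mem_univ i)
  obtain ⟨c, hcK, hmin⟩ := hK.exists_isMinOn ⟨c₀, hc₀, rfl⟩
    (f := fun c : ι → ℝ => ∑ i, c i * h i) (by fun_prop)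
  refine ⟨c, hcK.1, hcK.2, fun ν hν hν0 => ?_⟩
  obtain ⟨t, ht, htc⟩ := exists_pos_step c ν hcK.1 hν0
  have hmem : (fun i => c i + t * ν i) ∈ K := by
    refine ⟨htc, ?_⟩
    simp only [add_smul, mul_smul, Finset.sum_add_distrib, ← Finset.smul_sum, hν, smul_zero,
      add_zero]
    exact hcK.2
  have h3 := hmin hmem
  simp only [Set.mem_ofPred_eq, add_mul, Finset.sum_add_distrib, mul_assoc, ← Finset.mul_sum] at h3
  have h4 : 0 ≤ t * ∑ i, ν i * h i := by linarith
  exact nonneg_of_mul_nonneg_right h4 ht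

theorem exists_generic_height {k : ℕ} {ι : Type} [Fintype ι] (W : ι → Fin k → ℝ) :
    ∃ h : ι → ℝ, ∀ S : Finset ι, ¬ LinearIndependent ℝ (fun i : S => W i) →
      ∃ μ : ι → ℝ, (∀ i, i ∉ S → μ i = 0) ∧ ∑ i, μ i • W i = 0 ∧ ∑ i, μ i * h i ≠ 0 := by
  classical
  let I := {S : Finset ι // ¬ LinearIndependent ℝ (fun i : S => W i)}
  have hex : ∀ S : I, ∃ μ : ι → ℝ, (∀ i, i ∉ S.1 → μ i = 0) ∧ ∑ i, μ i • W i = 0 ∧ μ ≠ 0 := by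
    rintro ⟨S, hS⟩
    rw [Fintype.not_linearIndependent_iff] at hS
    obtain ⟨g, hg, i, hi⟩ := hS
    refine ⟨fun i => if hi : i ∈ S then g ⟨i, hi⟩ else 0, fun i hi => by simp [show i ∉ S from hi], ?_, ?_⟩
    · rw [← hg, ← Finset.sum_subset (Finset.subset_univ S), ← Finset.sum_coe_sort]
      · refine Finset.sum_congr rfl fun i _ => ?_
        simp
      · intro x _ hx; simp [hx]
    · intro h0
      have := congrFun h0 i.1
      simp at this
      exact hi this
  choose μ h1 h2 h3 using hex
  obtain ⟨f, hf⟩ := Module.exists_dual_forall_apply_ne_zero (K := ℝ) μ h3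
  refine ⟨fun i => f (Pi.single i 1), fun S hS => ⟨μ ⟨S, hS⟩, h1 ⟨S, hS⟩, h2 ⟨S, hS⟩, ?_⟩⟩
  have := hf ⟨S, hS⟩
  rw [LinearMap.pi_apply_eq_sum_univ f] at this
  have hs : ∀ i : ι, (Pi.single i 1 : ι → ℝ) = fun j => if i = j then 1 else 0 := by
    intro i; ext j; simp [Pi.single_apply, eq_comm]
  simpa only [hs, smul_eq_mul] using this

theorem exists_triangulation {k : ℕ} (hk : 0 < k) {ι : Type} [Fintype ι] (W : ι → Fin k → ℝ)
    (e : Fin k → ℝ) (he : ∀ i, 0 < e ⬝ᵥ W i) :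
    ∃ T : Finset (Finset ι),
      (∀ B ∈ T, LinearIndependent ℝ (fun i : B => W i) ∧ B.card = k) ∧
      ∀ y, (∀ S : Finset ι, S.card < k → y ∉ Submodule.span ℝ (W '' S)) →
        (y ∈ subCone W Finset.univ → ∃ B ∈ T, y ∈ subCone W B) ∧
        (∀ B ∈ T, ∀ B' ∈ T, y ∈ subCone W B → y ∈ subCone W B' → B = B') := by
  classical
  obtain ⟨h, hh⟩ := exists_generic_height W
  let T : Finset (Finset ι) := Finset.univ.filter fun B =>
    (LinearIndependent ℝ (fun i : B => W i) ∧ B.card = k) ∧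
    ∃ l : (Fin k → ℝ) →ₗ[ℝ] ℝ, (∀ i ∈ B, l (W i) = h i) ∧ (∀ i, i ∉ B → l (W i) < h i)
  have hspan : ∀ (c : ι → ℝ) (S : Finset ι), (∀ i, i ∉ S → c i = 0) →
      ∑ i, c i • W i ∈ Submodule.span ℝ (W '' S) := by
    intro c S hS
    refine Submodule.sum_mem _ fun i _ => ?_
    by_cases hi : i ∈ S
    · exact Submodule.smul_mem _ _ (Submodule.subset_span ⟨i, hi, rfl⟩)
    · simp [hS i hi]
  refine ⟨T, fun B hB => (Finset.mem_filter.1 hB).2.1, fun y hy => ⟨?_, ?_⟩⟩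
  · rintro ⟨c₀, hc₀, -, hyc⟩
    obtain ⟨c, hc, hcy, hmin⟩ := exists_lp_min W e he h c₀ hc₀
    rw [← hyc] at hcy
    let B : Finset ι := Finset.univ.filter fun i => c i ≠ 0
    have hBn : ∀ i, i ∉ B ↔ c i = 0 := by intro i; simp [B]
    have hLI : LinearIndependent ℝ (fun i : B => W i) := by
      by_contra hn
      obtain ⟨μ, hμ1, hμ2, hμ3⟩ := hh B hn
      have h1 := hmin μ hμ2 fun i hi => (hμ1 i ((hBn i).2 hi)).ge
      have h2 := hmin (-μ) (by simp [hμ2]) fun i hi => by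
        simp [hμ1 i ((hBn i).2 hi)]
      simp only [Pi.neg_apply, neg_mul, Finset.sum_neg_distrib] at h2
      exact hμ3 (by linarith)
    have hcard : B.card = k := by
      apply le_antisymm
      · simpa using hLI.fintype_card_le_finrank
      · by_contra hlt
        push Not at hlt
        apply hy B hlt
        rw [← hcy]
        exact hspan c B fun i hi => (hBn i).1 hi
    have : Nonempty B := by
      have : B.Nonempty := Finset.card_pos.1 (by omega)
      exact this.to_subtype
    let b := basisOfLinearIndependentOfCardEqFinrank hLI (by simp [hcard])
    have hb : ∀ i : B, b i = W i := fun i => by simp [b]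
    let l : (Fin k → ℝ) →ₗ[ℝ] ℝ := b.constr ℝ fun i : B => h i
    have hl : ∀ i ∈ B, l (W i) = h i := by
      intro i hi
      rw [← hb ⟨i, hi⟩]; exact b.constr_basis ℝ _ _
    have hle : ∀ i, i ∉ B → l (W i) ≤ h i := by
      intro i hi
      let a : ι → ℝ := fun j => if hj : j ∈ B then b.repr (W i) ⟨j, hj⟩ else 0
      have haW : ∑ j, a j • W j = W i := by
        rw [← Finset.sum_subset (Finset.subset_univ B) (by intro x _ hx; simp [a, hx]),
          ← Finset.sum_coe_sort]
        conv_rhs => rw [← b.sum_repr (W i)]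
        refine Finset.sum_congr rfl fun j _ => ?_
        rw [hb]; simp [a]
      have hal : ∑ j, a j * h j = l (W i) := by
        conv_rhs => rw [← haW]
        rw [map_sum]
        refine Finset.sum_congr rfl fun j _ => ?_
        rw [map_smul, smul_eq_mul]
        by_cases hj : j ∈ B
        · rw [hl j hj]
        · simp [a, hj]
      have := hmin (Pi.single i 1 - a) (by
          simp only [Pi.sub_apply, sub_smul, Finset.sum_sub_distrib, haW]
          simp [Pi.single_apply]) (by
          intro j hj
          have : a j = 0 := by simp [a, (hBn j).2 hj]
          simp only [Pi.sub_apply, this, sub_zero, Pi.single_apply]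
          split_ifs <;> norm_num)
      simp only [Pi.sub_apply, sub_mul, Finset.sum_sub_distrib, hal] at this
      simp [Pi.single_apply] at this
      exact this
    refine ⟨B, ?_, c, hc, fun i hi => (hBn i).1 hi, hcy.symm⟩
    simp only [T, Finset.mem_filter, Finset.mem_univ, true_and]
    refine ⟨⟨hLI, hcard⟩, l, hl, fun i hi => lt_of_le_of_ne (hle i hi) fun heq => ?_⟩
    have hdep : ¬ LinearIndependent ℝ (fun j : (insert i B : Finset ι) => W j) := by
      intro hli
      have := hli.fintype_card_le_finrank
      rw [Fintype.card_coe, Finset.card_insert_of_notMem hi] at this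
      simp at this
      omega
    obtain ⟨μ, hμ1, hμ2, hμ3⟩ := hh _ hdep
    apply hμ3
    have h0 : l (∑ i, μ i • W i) = 0 := by rw [hμ2, map_zero]
    rw [map_sum] at h0
    rw [← h0]
    refine Finset.sum_congr rfl fun j _ => ?_
    rw [map_smul, smul_eq_mul]
    by_cases hj : j ∈ insert i B
    · rcases Finset.mem_insert.1 hj with rfl | hj
      · rw [heq]
      · rw [hl j hj]
    · rw [hμ1 j hj]; simp
  · have key : ∀ B ∈ T, ∀ B' ∈ T, y ∈ subCone W B → y ∈ subCone W B' → B ⊆ B' := by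
      intro B hB B' hB' ⟨c, hc, hcB, hcy⟩ ⟨c', hc', hcB', hcy'⟩ i hi
      obtain ⟨⟨-, hcard⟩, l, hl1, hl2⟩ := (Finset.mem_filter.1 hB).2
      obtain ⟨⟨-, hcard'⟩, l', hl1', hl2'⟩ := (Finset.mem_filter.1 hB').2
      have ev : ∀ (m : (Fin k → ℝ) →ₗ[ℝ] ℝ) (d : ι → ℝ), m (∑ i, d i • W i) =
          ∑ i, d i * m (W i) := by intro m d; simp
      have hpos : c i ≠ 0 := by
        intro h0
        apply hy (B.erase i) (by rw [Finset.card_erase_of_mem hi]; omega)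
        rw [hcy]
        refine hspan c _ fun j hj => ?_
        by_cases hji : j = i
        · rw [hji, h0]
        · exact hcB j fun hjB => hj (Finset.mem_erase.2 ⟨hji, hjB⟩)
      have hll : ∀ j, l (W j) ≤ h j := fun j => by
        by_cases hj : j ∈ B
        · exact (hl1 j hj).le
        · exact (hl2 j hj).le
      have hll' : ∀ j, l' (W j) ≤ h j := fun j => by
        by_cases hj : j ∈ B'
        · exact (hl1' j hj).le
        · exact (hl2' j hj).le
      have e1 : l y = ∑ j, c j * h j := by
        rw [hcy, ev]
        refine Finset.sum_congr rfl fun j _ => ?_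
        by_cases hj : j ∈ B
        · rw [hl1 j hj]
        · rw [hcB j hj]; simp
      have e2 : l' y = ∑ j, c' j * h j := by
        rw [hcy', ev]
        refine Finset.sum_congr rfl fun j _ => ?_
        by_cases hj : j ∈ B'
        · rw [hl1' j hj]
        · rw [hcB' j hj]; simp
      have e3 : l y ≤ l' y := by
        rw [e2, hcy', ev]
        exact Finset.sum_le_sum fun j _ => mul_le_mul_of_nonneg_left (hll j) (hc' j)
      have e4 : l' y = ∑ j, c j * l' (W j) := by rw [hcy, ev]
      by_contra hi'
      have e5 : ∑ j, c j * l' (W j) < ∑ j, c j * h j := by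
        refine Finset.sum_lt_sum (fun j _ => mul_le_mul_of_nonneg_left (hll' j) (hc j))
          ⟨i, Finset.mem_univ i, ?_⟩
        exact mul_lt_mul_of_pos_left (hl2' i hi') (lt_of_le_of_ne (hc i) (Ne.symm hpos))
      linarith
    exact fun B hB B' hB' h1 h2 => (key B hB B' hB' h1 h2).antisymm (key B' hB' B hB h2 h1)

/-- Facet normals: vectors in the dual cone, cut out by their tight constraints. -/
def FacetNormal {k n : ℕ} (G : Fin n → Fin k → ℝ) (e w : Fin k → ℝ) : Prop :=
  (∀ j, 0 ≤ G j ⬝ᵥ w) ∧ w ≠ 0 ∧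
    ∀ z : Fin k → ℝ, (∀ j, G j ⬝ᵥ w = 0 → G j ⬝ᵥ z = 0) → e ⬝ᵥ z = 0 → z = 0

/-- Moving inside the dual cone until a new constraint becomes tight. -/
theorem exists_tight_step {k n : ℕ} (G : Fin n → Fin k → ℝ) (y z : Fin k → ℝ)
    (hy : ∀ j, 0 ≤ G j ⬝ᵥ y) (hz : ∀ j, G j ⬝ᵥ y = 0 → G j ⬝ᵥ z = 0)
    (hneg : ∃ j, G j ⬝ᵥ z < 0) :
    ∃ t : ℝ, 0 < t ∧ (∀ j, 0 ≤ G j ⬝ᵥ (y + t • z)) ∧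
      (∀ j, G j ⬝ᵥ y = 0 → G j ⬝ᵥ (y + t • z) = 0) ∧
      ∃ j, G j ⬝ᵥ y ≠ 0 ∧ G j ⬝ᵥ (y + t • z) = 0 := by
  classical
  let S : Finset (Fin n) := Finset.univ.filter fun j => G j ⬝ᵥ z < 0
  have hS : S.Nonempty := by
    obtain ⟨j, hj⟩ := hneg
    exact ⟨j, by simp [S, hj]⟩
  obtain ⟨m, hm, hmin⟩ := S.exists_min_image (fun j => (G j ⬝ᵥ y) / (-(G j ⬝ᵥ z))) hS
  have hmz : G m ⬝ᵥ z < 0 := (Finset.mem_filter.1 hm).2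
  have hmy : G m ⬝ᵥ y ≠ 0 := fun h => hmz.ne (hz m h)
  have hmy' : 0 < G m ⬝ᵥ y := lt_of_le_of_ne (hy m) (Ne.symm hmy)
  refine ⟨(G m ⬝ᵥ y) / (-(G m ⬝ᵥ z)), div_pos hmy' (by linarith), fun j => ?_, fun j hj => ?_,
    m, hmy, ?_⟩
  · rw [dotProduct_add, dotProduct_smul, smul_eq_mul]
    rcases lt_or_ge (G j ⬝ᵥ z) 0 with h | h
    · have h1 := hmin j (by simp [S, h])
      have h2 := (le_div_iff₀ (by linarith : 0 < -(G j ⬝ᵥ z))).1 h1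
      linarith
    · have : 0 ≤ (G m ⬝ᵥ y) / (-(G m ⬝ᵥ z)) := (div_pos hmy' (by linarith)).le
      have := mul_nonneg this h
      linarith [hy j]
  · rw [dotProduct_add, dotProduct_smul, hj, hz j hj]; simp
  · rw [dotProduct_add, dotProduct_smul, smul_eq_mul]
    have := hmz.ne
    field_simp
    ring

theorem subCone_add {k : ℕ} {ι : Type} [Fintype ι] (W : ι → Fin k → ℝ) (B : Finset ι)
    {x y : Fin k → ℝ} (hx : x ∈ subCone W B) (hy : y ∈ subCone W B) : x + y ∈ subCone W B := by
  obtain ⟨c, h1, h2, rfl⟩ := hx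
  obtain ⟨d, h3, h4, rfl⟩ := hy
  refine ⟨fun i => c i + d i, fun i => add_nonneg (h1 i) (h3 i), fun i hi => ?_, ?_⟩
  · simp [h2 i hi, h4 i hi]
  · simp [add_smul, Finset.sum_add_distrib]

theorem subCone_smul {k : ℕ} {ι : Type} [Fintype ι] (W : ι → Fin k → ℝ) (B : Finset ι)
    {x : Fin k → ℝ} {t : ℝ} (ht : 0 ≤ t) (hx : x ∈ subCone W B) : t • x ∈ subCone W B := by
  obtain ⟨c, h1, h2, rfl⟩ := hx
  refine ⟨fun i => t * c i, fun i => mul_nonneg ht (h1 i), fun i hi => ?_, ?_⟩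
  · simp [h2 i hi]
  · simp [mul_smul, Finset.smul_sum]

theorem exists_facet_generators {k n : ℕ} (G : Fin n → Fin k → ℝ) (e : Fin k → ℝ)
    (he : ∀ y, (∀ j, 0 ≤ G j ⬝ᵥ y) → y ≠ 0 → 0 < e ⬝ᵥ y) :
    ∃ (p : ℕ) (L : Fin p → Fin k → ℝ), (∀ i, FacetNormal G e (L i)) ∧
      ∀ y, (∀ j, 0 ≤ G j ⬝ᵥ y) → y ∈ subCone L Finset.univ := by
  classical
  let J : (Fin k → ℝ) → Finset (Fin n) := fun w => Finset.univ.filter fun j => G j ⬝ᵥ w = 0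
  have hJ : ∀ w j, j ∈ J w ↔ G j ⬝ᵥ w = 0 := by intro w j; simp [J]
  let I := {S : Finset (Fin n) // ∃ w, FacetNormal G e w ∧ J w = S}
  let M : I → Fin k → ℝ := fun S => S.2.choose
  have hM : ∀ S : I, FacetNormal G e (M S) ∧ J (M S) = S.1 := fun S => S.2.choose_spec
  let E := Fintype.equivFin I
  refine ⟨Fintype.card I, fun i => M (E.symm i), fun i => (hM _).1, ?_⟩
  set L : Fin (Fintype.card I) → Fin k → ℝ := fun i => M (E.symm i) with hL
  have hLmem : ∀ i, L i ∈ subCone L Finset.univ := by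
    intro i
    refine ⟨Pi.single i 1, fun j => ?_, by simp, ?_⟩
    · simp only [Pi.single_apply]; split_ifs <;> norm_num
    · simp [Pi.single_apply]
  have hzero : (0 : Fin k → ℝ) ∈ subCone L Finset.univ := ⟨0, by simp, by simp, by simp⟩
  have hN : ∀ w, FacetNormal G e w → w ∈ subCone L Finset.univ := by
    intro w hw
    let S : I := ⟨J w, w, hw, rfl⟩
    obtain ⟨h1, h2⟩ := hM S
    have hmem : M S ∈ subCone L Finset.univ := by
      have := hLmem (E S); simpa [hL] using this
    have ew := he w hw.1 hw.2.1
    have eM := he (M S) h1.1 h1.2.1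
    have hz : (e ⬝ᵥ M S) • w - (e ⬝ᵥ w) • M S = 0 := by
      apply hw.2.2
      · intro j hj
        have : G j ⬝ᵥ M S = 0 := by
          rw [← hJ, h2]; exact (hJ w j).2 hj
        rw [dotProduct_sub, dotProduct_smul, dotProduct_smul, hj, this]; simp
      · rw [dotProduct_sub, dotProduct_smul, dotProduct_smul, smul_eq_mul, smul_eq_mul]; ring
    have hw' : w = ((e ⬝ᵥ w) / (e ⬝ᵥ M S)) • M S := by
      rw [sub_eq_zero] at hz
      rw [div_eq_inv_mul, mul_smul, ← hz, smul_smul, inv_mul_cancel₀ eM.ne', one_smul]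
    rw [hw']
    exact subCone_smul _ _ (div_nonneg ew.le eM.le) hmem
  have main : ∀ m : ℕ, ∀ y, (∀ j, 0 ≤ G j ⬝ᵥ y) → n - (J y).card = m →
      y ∈ subCone L Finset.univ := by
    intro m
    induction m using Nat.strong_induction_on with
    | _ m ih =>
      intro y hy hm
      by_cases hy0 : y = 0
      · rw [hy0]; exact hzero
      by_cases hf : FacetNormal G e y
      · exact hN y hf
      have hz : ∃ z : Fin k → ℝ, (∀ j, G j ⬝ᵥ y = 0 → G j ⬝ᵥ z = 0) ∧ e ⬝ᵥ z = 0 ∧ z ≠ 0 := by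
        by_contra hcon
        push Not at hcon
        exact hf ⟨hy, hy0, hcon⟩
      obtain ⟨z, hz1, hz2, hz3⟩ := hz
      have step : ∀ z : Fin k → ℝ, (∀ j, G j ⬝ᵥ y = 0 → G j ⬝ᵥ z = 0) → e ⬝ᵥ z = 0 → z ≠ 0 →
          ∃ t : ℝ, 0 < t ∧ y + t • z ∈ subCone L Finset.univ := by
        intro z hz1 hz2 hz3
        have hneg : ∃ j, G j ⬝ᵥ z < 0 := by
          by_contra hcon
          push Not at hcon
          exact (he z hcon hz3).ne' hz2
        obtain ⟨t, ht, h1, h2, j, h3, h4⟩ := exists_tight_step G y z hy hz1 hneg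
        refine ⟨t, ht, ih _ ?_ _ h1 rfl⟩
        have hlt : (J y).card < (J (y + t • z)).card := by
          apply Finset.card_lt_card
          rw [Finset.ssubset_iff_of_subset]
          · exact ⟨j, (hJ _ _).2 h4, fun h => h3 ((hJ _ _).1 h)⟩
          · intro i hi
            exact (hJ _ _).2 (h2 i ((hJ _ _).1 hi))
        have hle : (J (y + t • z)).card ≤ n := by
          simpa using Finset.card_le_univ (J (y + t • z))
        omega
      obtain ⟨t, ht, h1⟩ := step z hz1 hz2 hz3
      obtain ⟨u, hu, h2⟩ := step (-z) (fun j hj => by rw [dotProduct_neg, hz1 j hj, neg_zero])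
        (by rw [dotProduct_neg, hz2, neg_zero]) (neg_ne_zero.2 hz3)
      have hy' : y = (u / (t + u)) • (y + t • z) + (t / (t + u)) • (y + u • -z) := by
        have : t + u ≠ 0 := by positivity
        ext i
        simp only [Pi.add_apply, Pi.smul_apply, Pi.neg_apply, smul_eq_mul]
        field_simp
        ring
      rw [hy']
      exact subCone_add _ _ (subCone_smul _ _ (by positivity) h1)
        (subCone_smul _ _ (by positivity) h2)
  exact fun y hy => main _ y hy rfl

/-- The span of the face cut out by a facet normal is a hyperplane. -/
theorem facet_finrank {k n : ℕ} (hk : 0 < k) (G : Fin n → Fin k → ℝ) (Λ : Set (Fin k → ℝ))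
    (hG : ∀ j, G j ∈ Λ) (e w : Fin k → ℝ) (hw : FacetNormal G e w) (hew : e ⬝ᵥ w ≠ 0) :
    Module.finrank ℝ (Submodule.span ℝ {x | x ∈ Λ ∧ ∑ i, w i * x i = 0}) = k - 1 := by
  set F := Submodule.span ℝ {x | x ∈ Λ ∧ ∑ i, w i * x i = 0} with hF
  have htop : F ⊔ Submodule.span ℝ {e} = ⊤ := by
    by_contra hne
    obtain ⟨f, hf0, hf⟩ := Submodule.exists_le_ker_of_lt_top _ (lt_top_iff_ne_top.2 hne)
    let z : Fin k → ℝ := fun i => f (Pi.single i 1)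
    have hfz : ∀ x, f x = x ⬝ᵥ z := by
      intro x
      rw [LinearMap.pi_apply_eq_sum_univ f]
      have hs : ∀ i : Fin k, (Pi.single i 1 : Fin k → ℝ) = fun j => if i = j then 1 else 0 := by
        intro i; ext j; simp [Pi.single_apply, eq_comm]
      simp only [dotProduct, z, hs, smul_eq_mul]
    have hz : z = 0 := by
      apply hw.2.2
      · intro j hj
        rw [← hfz]
        refine hf (Submodule.mem_sup_left (Submodule.subset_span ⟨hG j, ?_⟩))
        rw [dotProduct_comm] at hj; exact hj
      · rw [← hfz]
        exact hf (Submodule.mem_sup_right (Submodule.mem_span_singleton_self e))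
    apply hf0
    ext x
    simp [hfz, hz]
  have hlt : F < ⊤ := by
    rw [lt_top_iff_ne_top]
    intro h
    have hle : F ≤ LinearMap.ker (dotProductBilin ℝ ℝ w : (Fin k → ℝ) →ₗ[ℝ] ℝ) := by
      rw [hF, Submodule.span_le]
      rintro x ⟨-, hx⟩
      exact hx
    have : e ∈ F := by rw [h]; trivial
    have := hle this
    apply hew
    rw [dotProduct_comm]
    exact this
  have h1 := Submodule.finrank_lt_finrank_of_lt hlt
  have h2 := Submodule.finrank_add_le_finrank_add_finrank F (Submodule.span ℝ {e})
  rw [htop] at h2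
  have h3 := finrank_span_le_card (R := ℝ) ({e} : Set (Fin k → ℝ))
  simp only [finrank_top, Module.finrank_fin_fun] at h1 h2
  simp at h3
  omega

/-- The dual of the cone generated by the `G j`, strictly positive elements. -/
theorem exists_strictly_positive {k n : ℕ} (G : Fin n → Fin k → ℝ)
    (hs : ∀ c : Fin n → ℝ, (∀ j, 0 ≤ c j) → ∑ j, c j • G j = 0 → ∀ j, c j • G j = 0) :
    ∃ y : Fin k → ℝ, ∀ j, G j ≠ 0 → 0 < G j ⬝ᵥ y := by
  classical
  let S : Finset (Fin n) := Finset.univ.filter fun j => G j ≠ 0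
  let A : Set (Fin k → ℝ) := convexHull ℝ ((S.image G : Finset (Fin k → ℝ)) : Set (Fin k → ℝ))
  have hcl : IsClosed A := (Finset.finite_toSet _).isClosed_convexHull ℝ
  have h0 : (0 : Fin k → ℝ) ∉ A := by
    intro h
    have h' : (0 : Fin k → ℝ) ∈ convexHull ℝ (G '' (S : Set (Fin n))) := by
      simpa [A] using h
    rw [← Finset.coe_image, Finset.mem_convexHull'] at h'
    obtain ⟨v, hv0, hv1, hv2⟩ := h'
    have hsec : ∀ x ∈ S.image G, ∃ j ∈ S, G j = x := fun x hx => Finset.mem_image.1 hx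
    have hne : Nonempty (Fin n) := by
      by_contra hemp
      have : S.image G = ∅ := by
        rw [Finset.eq_empty_iff_forall_notMem]
        intro x hx
        obtain ⟨j, -, -⟩ := hsec x hx
        exact hemp ⟨j⟩
      rw [this, Finset.sum_empty] at hv1
      exact zero_ne_one hv1
    choose! σ hσ1 hσ2 using hsec
    let c : Fin n → ℝ := fun j => if j ∈ S ∧ σ (G j) = j then v (G j) else 0
    have hc : ∀ j, 0 ≤ c j := by
      intro j
      simp only [c]
      split_ifs with hj
      · exact hv0 _ (Finset.mem_image_of_mem G hj.1)
      · exact le_rfl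
    have hcσ : ∀ x ∈ S.image G, c (σ x) = v x := by
      intro x hx
      simp only [c]
      rw [if_pos ⟨hσ1 x hx, by rw [hσ2 x hx]⟩, hσ2 x hx]
    have hsum : ∑ j, c j • G j = 0 := by
      rw [← hv2]
      symm
      apply Finset.sum_of_injOn σ
      · intro x hx y hy hxy
        rw [← hσ2 x hx, hxy, hσ2 y hy]
      · intro x _; simp
      · intro j _ hj
        have : c j = 0 := by
          simp only [c]
          rw [if_neg]
          rintro ⟨h1, h2⟩
          exact hj ⟨G j, Finset.mem_image_of_mem G h1, h2⟩
        rw [this, zero_smul]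
      · intro x hx
        rw [hcσ x hx, hσ2 x hx]
    have hall := hs c hc hsum
    have : ∀ x ∈ S.image G, v x = 0 := by
      intro x hx
      have h1 := hall (σ x)
      rw [hcσ x hx] at h1
      rcases smul_eq_zero.1 h1 with h2 | h2
      · exact h2
      · exact absurd h2 (Finset.mem_filter.1 (hσ1 x hx)).2
    rw [Finset.sum_eq_zero this] at hv1
    exact zero_ne_one hv1
  obtain ⟨f, u, hu, hf⟩ := geometric_hahn_banach_point_closed (convex_convexHull ℝ _) hcl h0
  refine ⟨fun i => f (Pi.single i 1), fun j hj => ?_⟩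
  have hfz : f (G j) = G j ⬝ᵥ fun i => f (Pi.single i 1) := by
    have := LinearMap.pi_apply_eq_sum_univ (f : (Fin k → ℝ) →ₗ[ℝ] ℝ) (G j)
    have hs : ∀ i : Fin k, (Pi.single i 1 : Fin k → ℝ) = fun j => if i = j then 1 else 0 := by
      intro i; ext j; simp [Pi.single_apply, eq_comm]
    simp only [dotProduct, hs]
    simpa using this
  rw [← hfz]
  have := hf (G j) (subset_convexHull ℝ _ (by
    simp only [Finset.coe_image]
    exact ⟨j, by simp [S, hj], rfl⟩))
  rw [map_zero] at hu
  linarith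

theorem subCone_eq_repr {k : ℕ} {ι : Type} [Fintype ι] (W : ι → Fin k → ℝ) (B : Finset ι)
    (b : Module.Basis B ℝ (Fin k → ℝ)) (hb : ∀ i, b i = W i) :
    subCone W B = {y | ∀ i, 0 ≤ b.repr y i} := by
  classical
  ext y
  constructor
  · rintro ⟨c, h1, h2, rfl⟩ i
    have : ∑ j, c j • W j = ∑ j : B, c j • b j := by
      rw [← Finset.sum_subset (Finset.subset_univ B) (by intro x _ hx; simp [h2 x hx]),
        ← Finset.sum_coe_sort]
      exact Finset.sum_congr rfl fun j _ => by rw [hb]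
    rw [this, b.repr_sum_self fun j : B => c j]
    exact h1 i
  · intro hy
    refine ⟨fun j => if hj : j ∈ B then b.repr y ⟨j, hj⟩ else 0, fun j => ?_, fun j hj => ?_, ?_⟩
    · dsimp only
      split_ifs with hj
      · exact hy _
      · exact le_rfl
    · simp [hj]
    · rw [← Finset.sum_subset (Finset.subset_univ B) (by intro x _ hx; simp [hx]),
          ← Finset.sum_coe_sort]
      conv_lhs => rw [← b.sum_repr y]
      refine Finset.sum_congr rfl fun j _ => ?_
      rw [hb]; simp

theorem subCone_integral {k : ℕ} (hk : 0 < k) {ι : Type} [Fintype ι] (W : ι → Fin k → ℝ)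
    (B : Finset ι) (hLI : LinearIndependent ℝ (fun i : B => W i)) (hcard : B.card = k) :
    MeasurableSet (subCone W B) ∧
    ∃ D : ℝ, ∀ s : Fin k → ℂ, (∀ i, 0 < ∑ j, (s j).re * W i j) →
      IntegrableOn (fun y : Fin k → ℝ => Complex.exp (-∑ i, s i * (y i : ℂ))) (subCone W B) ∧
      ∫ y in subCone W B, Complex.exp (-∑ i, s i * (y i : ℂ))
        = D / ∏ i ∈ B, ∑ j, (W i j : ℂ) * s j := by
  have : Nonempty B := (Finset.card_pos.1 (by omega) : B.Nonempty).to_subtype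
  let b := basisOfLinearIndependentOfCardEqFinrank hLI (by simp [hcard])
  have hb : ∀ i : B, b i = W i := fun i => by simp [b]
  have heq := subCone_eq_repr W B b hb
  constructor
  · rw [heq]
    have : {y | ∀ i, 0 ≤ b.repr y i} = ⋂ i, {y | 0 ≤ b.coord i y} := by ext; simp
    rw [this]
    exact MeasurableSet.iInter fun i => (isClosed_le continuous_const
      (LinearMap.continuous_of_finiteDimensional (b.coord i))).measurableSet
  · obtain ⟨D, hD⟩ := simplicial_integral b
    refine ⟨D, fun s hs => ?_⟩
    rw [heq]
    obtain ⟨h1, h2⟩ := hD s fun i => by rw [hb]; exact hs i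
    refine ⟨h1, h2.trans ?_⟩
    rw [← Finset.prod_coe_sort B]
    simp_rw [hb]

/-- the X-function of a full-dimensional finitely generated rational
polyhedral cone `Λ` with `Λ ∩ (−Λ) = {0}` is a rational function `P/Q` where `P` is a
homogeneous polynomial, `Q` is a product of linear homogeneous forms, each nonnegative
on `Λ` and vanishing on a codimension-1 face of `Λ`, and `deg P − deg Q = −k`. -/
theorem XFunction_rational (k n : ℕ) (hk : 0 < k) (g : Fin n → Fin k → ℚ)
    (Λ : Set (Fin k → ℝ))
    (hΛ : Λ = {x | ∃ c : Fin n → ℝ, (∀ j, 0 ≤ c j) ∧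
      x = ∑ j, c j • fun i => ((g j i : ℝ))})
    (hsal : Λ ∩ (-Λ) = {0}) (hfull : (interior Λ).Nonempty) :
    ∃ (d : ℕ) (P : MvPolynomial (Fin k) ℝ), P.IsHomogeneous d ∧
      ∃ (p : ℕ) (L : Fin p → Fin k → ℝ),
        (∀ j, ∀ x ∈ Λ, 0 ≤ ∑ i, L j i * x i) ∧
        (∀ j, Module.finrank ℝ
            (Submodule.span ℝ {x | x ∈ Λ ∧ ∑ i, L j i * x i = 0}) = k - 1) ∧
        (d : ℤ) - (p : ℤ) = -(k : ℤ) ∧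
        ∀ s : Fin k → ℂ, (fun i => (s i).re) ∈ interior Λ →
          XFun Λ s * ∏ j, (∑ i, (L j i : ℂ) * s i)
            = MvPolynomial.eval s (P.map (algebraMap ℝ ℂ)) := by
  classical
  let G : Fin n → Fin k → ℝ := fun j i => (g j i : ℝ)
  have hΛ' : Λ = {x | ∃ c : Fin n → ℝ, (∀ j, 0 ≤ c j) ∧ x = ∑ j, c j • G j} := hΛ
  have hadd : ∀ (c : Fin n → ℝ), (∀ j, 0 ≤ c j) → ∑ j, c j • G j ∈ Λ := by
    intro c hc; rw [hΛ']; exact ⟨c, hc, rfl⟩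
  have hG : ∀ j, G j ∈ Λ := by
    intro j
    have := hadd (Pi.single j 1) (fun i => by
      simp only [Pi.single_apply]; split_ifs <;> norm_num)
    simpa [Pi.single_apply] using this
  have hdual : ∀ y, y ∈ dualCone Λ ↔ ∀ j, 0 ≤ G j ⬝ᵥ y := by
    intro y
    constructor
    · intro h j; exact h _ (hG j)
    · intro h x hx
      rw [hΛ'] at hx
      obtain ⟨c, hc, rfl⟩ := hx
      change 0 ≤ (∑ j, c j • G j) ⬝ᵥ y
      rw [sum_dotProduct]
      exact Finset.sum_nonneg fun j _ => by
        rw [smul_dotProduct]; exact mul_nonneg (hc j) (h j)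
  have hpos : ∀ e ∈ interior Λ, ∀ y, (∀ j, 0 ≤ G j ⬝ᵥ y) → y ≠ 0 → 0 < e ⬝ᵥ y := by
    intro e he y hy hy0
    have hyd := (hdual y).2 hy
    have hcont : Continuous fun t : ℝ => e - t • y := by fun_prop
    have h1 : ∀ᶠ t in nhds (0:ℝ), e - t • y ∈ interior Λ := by
      apply hcont.tendsto 0
      simpa using isOpen_interior.mem_nhds he
    have h2 : ∀ᶠ t in nhdsWithin (0:ℝ) (Set.Ioi 0), e - t • y ∈ interior Λ :=
      nhdsWithin_le_nhds h1
    obtain ⟨t, ht, ht0⟩ := (h2.and self_mem_nhdsWithin).exists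
    have h3 : 0 ≤ (e - t • y) ⬝ᵥ y := hyd _ (interior_subset ht)
    rw [sub_dotProduct, smul_dotProduct, smul_eq_mul] at h3
    have h4 : 0 < y ⬝ᵥ y := by
      rw [lt_iff_le_and_ne]
      refine ⟨Finset.sum_nonneg fun i _ => mul_self_nonneg _, fun h => hy0 ?_⟩
      exact dotProduct_self_eq_zero.1 h.symm
    have h5 : 0 < t * (y ⬝ᵥ y) := mul_pos ht0 h4
    linarith
  obtain ⟨e, he⟩ := hfull
  obtain ⟨p, L, hLN, hLgen⟩ := exists_facet_generators G e (hpos e he)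
  have hLe : ∀ e ∈ interior Λ, ∀ i, 0 < e ⬝ᵥ L i := fun e he i =>
    hpos e he _ (hLN i).1 (hLN i).2.1
  obtain ⟨T, hT1, hT2⟩ := exists_triangulation hk L e (hLe e he)
  have hkp : k ≤ p := by
    obtain ⟨y, hy⟩ := exists_strictly_positive G (by
      intro c hc hsum j
      have h1 : c j • G j ∈ Λ := by
        have := hadd (Pi.single j (c j)) (fun i => by
          simp only [Pi.single_apply]; split_ifs
          · exact hc j
          · exact le_rfl)
        simpa [Pi.single_apply] using this
      have h2 : -(c j • G j) ∈ Λ := by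
        have := hadd (fun i => if i = j then 0 else c i) (fun i => by
          split_ifs
          · exact le_rfl
          · exact hc i)
        convert this using 1
        rw [← Finset.add_sum_erase _ _ (Finset.mem_univ j)] at hsum ⊢
        rw [neg_eq_of_add_eq_zero_right hsum]
        simp only [if_true, zero_smul, zero_add]
        refine Finset.sum_congr rfl fun i hi => ?_
        rw [if_neg (Finset.ne_of_mem_erase hi)]
      have : c j • G j ∈ Λ ∩ -Λ := ⟨h1, h2⟩
      rw [hsal] at this
      exact this)
    have hev : ∀ᶠ x in nhds y, x ∈ dualCone Λ := by
      have : ∀ᶠ x in nhds y, ∀ j, 0 ≤ G j ⬝ᵥ x := by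
        rw [Filter.eventually_all]
        intro j
        by_cases hj : G j = 0
        · simp [hj]
        · have hc : Continuous fun x : Fin k → ℝ => G j ⬝ᵥ x := by
            unfold dotProduct; fun_prop
          filter_upwards [(hc.tendsto y).eventually (lt_mem_nhds (hy j hj))] with x hx
          exact le_of_lt hx
      filter_upwards [this] with x hx using (hdual x).2 hx
    have hspan : Submodule.span ℝ (Set.range L) = ⊤ := by
      apply Submodule.eq_top_of_nonempty_interior'
      refine ⟨y, mem_interior_iff_mem_nhds.2 ?_⟩
      filter_upwards [hev] with x hx
      obtain ⟨c, -, -, rfl⟩ := hLgen x ((hdual x).1 hx)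
      exact Submodule.sum_mem _ fun i _ =>
        Submodule.smul_mem _ _ (Submodule.subset_span ⟨i, rfl⟩)
    have := finrank_range_le_card (R := ℝ) L
    rw [Set.finrank, hspan] at this
    simpa using this
  have hdm : MeasurableSet (dualCone Λ) := by
    have : dualCone Λ = ⋂ j, {y | 0 ≤ G j ⬝ᵥ y} := by
      ext y; simp [hdual]
    rw [this]
    refine MeasurableSet.iInter fun j => (isClosed_le continuous_const ?_).measurableSet
    unfold dotProduct; fun_prop
  have hsub : ∀ B : Finset (Fin p), subCone L B ⊆ dualCone Λ := by
    rintro B y ⟨c, hc, -, rfl⟩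
    rw [hdual]
    intro j
    rw [dotProduct_sum]
    exact Finset.sum_nonneg fun i _ => by
      rw [dotProduct_smul]; exact mul_nonneg (hc i) ((hLN i).1 j)
  have hI := fun B (hB : B ∈ T) => subCone_integral hk L B (hT1 B hB).1 (hT1 B hB).2
  have hI2 : ∀ B, ∃ D : ℝ, B ∈ T → ∀ s : Fin k → ℂ, (∀ i, 0 < ∑ j, (s j).re * L i j) →
      IntegrableOn (fun y : Fin k → ℝ => Complex.exp (-∑ i, s i * (y i : ℂ))) (subCone L B) ∧
      ∫ y in subCone L B, Complex.exp (-∑ i, s i * (y i : ℂ))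
        = D / ∏ i ∈ B, ∑ j, (L i j : ℂ) * s j := by
    intro B
    by_cases hB : B ∈ T
    · obtain ⟨D, hD⟩ := (hI B hB).2
      exact ⟨D, fun _ => hD⟩
    · exact ⟨0, fun h => absurd h hB⟩
  choose D hD using hI2
  have hgen : ∀ᵐ y : Fin k → ℝ, ∀ S : Finset (Fin p), S.card < k →
      y ∉ Submodule.span ℝ (L '' S) := by
    rw [ae_all_iff]
    intro S
    by_cases hS : S.card < k
    · have hne : Submodule.span ℝ (L '' S) ≠ ⊤ := by
        intro h
        have h1 := finrank_span_finset_le_card (R := ℝ) (S.image L)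
        rw [Finset.coe_image, Set.finrank, h, finrank_top, Module.finrank_fin_fun] at h1
        have h2 := Finset.card_image_le (s := S) (f := L)
        omega
      have h0 := Measure.addHaar_submodule (volume : Measure (Fin k → ℝ)) _ hne
      filter_upwards [measure_eq_zero_iff_ae_notMem.1 h0] with y hy _ using hy
    · exact Filter.Eventually.of_forall fun y h => absurd h hS
  let lin : Fin p → MvPolynomial (Fin k) ℝ := fun j =>
    ∑ i, MvPolynomial.C (L j i) * MvPolynomial.X i
  refine ⟨p - k, ∑ B ∈ T, MvPolynomial.C (D B) * ∏ j ∈ Bᶜ, lin j, ?_, p, L, ?_, ?_, ?_, ?_⟩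
  · refine MvPolynomial.IsHomogeneous.sum _ _ _ fun B hB => ?_
    have h1 : (∏ j ∈ Bᶜ, lin j).IsHomogeneous (∑ j ∈ Bᶜ, 1) := by
      refine MvPolynomial.IsHomogeneous.prod _ _ _ fun j _ => ?_
      refine MvPolynomial.IsHomogeneous.sum _ _ _ fun i _ => ?_
      simpa using (MvPolynomial.isHomogeneous_C (Fin k) (L j i)).mul
        (MvPolynomial.isHomogeneous_X ℝ i)
    have h2 := (MvPolynomial.isHomogeneous_C (Fin k) (D B)).mul h1
    convert h2 using 1
    simp [Finset.card_compl, (hT1 B hB).2]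
  · intro j x hx
    have := (hdual (L j)).2 (hLN j).1 x hx
    simpa [mul_comm] using this
  · intro j
    exact facet_finrank hk G Λ hG e (L j) (hLN j) (hLe e he j).ne'
  · omega
  · intro s hs
    have hre : ∀ i, 0 < ∑ j, (s j).re * L i j := fun i => hLe _ hs i
    have hne : ∀ i, ∑ j, (L i j : ℂ) * s j ≠ 0 := by
      intro i h0
      have h1 := congrArg Complex.re h0
      simp only [Complex.re_sum, Complex.re_ofReal_mul, Complex.zero_re] at h1
      have h2 := hre i
      simp only [mul_comm (s _).re] at h2
      linarith
    set f : (Fin k → ℝ) → ℂ := fun y => Complex.exp (-∑ i, s i * (y i : ℂ)) with hf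
    have hX : XFun Λ s = ∑ B ∈ T, (D B : ℂ) / ∏ i ∈ B, ∑ j, (L i j : ℂ) * s j := by
      have h1 : XFun Λ s = ∫ y, (dualCone Λ).indicator f y := by
        rw [integral_indicator hdm]; rfl
      have h2 : (fun y => (dualCone Λ).indicator f y) =ᵐ[volume]
          fun y => ∑ B ∈ T, (subCone L B).indicator f y := by
        filter_upwards [hgen] with y hy
        obtain ⟨hy1, hy2⟩ := hT2 y hy
        by_cases hyd : y ∈ dualCone Λ
        · obtain ⟨B, hB, hyB⟩ := hy1 (hLgen y ((hdual y).1 hyd))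
          rw [Set.indicator_of_mem hyd, Finset.sum_eq_single_of_mem B hB,
            Set.indicator_of_mem hyB]
          intro B' hB' hne'
          exact Set.indicator_of_notMem (fun h => hne' (hy2 B' hB' B hB h hyB)) _
        · rw [Set.indicator_of_notMem hyd, Finset.sum_eq_zero]
          intro B _
          exact Set.indicator_of_notMem (fun h => hyd (hsub B h)) _
      rw [h1, integral_congr_ae h2, integral_finsetSum]
      · refine Finset.sum_congr rfl fun B hB => ?_
        rw [integral_indicator (hI B hB).1]
        exact (hD B hB s hre).2
      · intro B hB
        exact (integrable_indicator_iff (hI B hB).1).2 (hD B hB s hre).1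
    rw [hX, Finset.sum_mul]
    simp only [map_sum, map_mul, map_prod, lin, MvPolynomial.map_C, MvPolynomial.map_X,
      MvPolynomial.eval_C, MvPolynomial.eval_X, Complex.coe_algebraMap]
    refine Finset.sum_congr rfl fun B _ => ?_
    rw [← Finset.prod_mul_prod_compl B]
    have : ∏ i ∈ B, ∑ j, (L i j : ℂ) * s j ≠ 0 := Finset.prod_ne_zero_iff.2 fun i _ => hne i
    field_simp
end

section
/- Let the cone Λ_eff ⊂ ℝ^4 (with coordinates indexed by divisor classes) be the image under the linear projection ψ : ℝ^6 → ℝ^6/M_ℝ of the positive orthant ℝ^6_{≥0}, where M ⊂ ℤ^6 is the rank-2 sublattice spanned by γ₁ = e₁ + e₅ − e₂ − e₆ and γ₂ = e₁ + e₄ − e₃ − e₆ (coordinates ordered as (s₁, s₂, s₃, s₁₂, s₁₃, s₂₃)). Then the X-function of Λ_eff evaluated at ψ(s) equals (s₁+s₂+s₃+s₁₂+s₁₃+s₂₃) / ((s₁+s₂₃)(s₂+s₁₃)(s₃+s₁₂)(s₁+s₂+s₃)(s₁₂+s₁₃+s₂₃)). -/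
open MeasureTheory

/-- The lattice vector `γ₁ = e₁ + e₅ − e₂ − e₆` (coordinates ordered
`(s₁, s₂, s₃, s₁₂, s₁₃, s₂₃)`). -/
noncomputable def gammaOne : Fin 6 → ℝ := ![1, -1, 0, 0, 1, -1]

/-- The lattice vector `γ₂ = e₁ + e₄ − e₃ − e₆`. -/
noncomputable def gammaTwo : Fin 6 → ℝ := ![1, 0, -1, 1, 0, -1]

open scoped FourierTransform

/-- Two-sided exponential. -/
noncomputable def twoExp (p q : ℂ) (t : ℝ) : ℂ :=
  if t ≤ 0 then Complex.exp (q * t) else Complex.exp (-p * t)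

/-- Its Fourier transform, up to a constant. -/
noncomputable def kerK (p q : ℂ) (a : ℝ) : ℂ :=
  (p + Complex.I * a)⁻¹ * (q - Complex.I * a)⁻¹

lemma twoExp_continuous (p q : ℂ) : Continuous (twoExp p q) := by
  unfold twoExp
  refine Continuous.if_le (by fun_prop) (by fun_prop) continuous_id continuous_const ?_
  intro x hx
  have : x = 0 := hx
  simp [this]

lemma twoExp_Iic {p q : ℂ} : Set.EqOn (twoExp p q) (fun t : ℝ => Complex.exp (q * t)) (Set.Iic 0) := by
  intro t ht
  have : t ≤ 0 := ht
  simp [twoExp, this]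

lemma twoExp_Ioi {p q : ℂ} : Set.EqOn (twoExp p q) (fun t : ℝ => Complex.exp (-p * t)) (Set.Ioi 0) := by
  intro t ht
  have : ¬ t ≤ 0 := not_le.mpr ht
  simp [twoExp, this]

lemma twoExp_intOn1 {p q : ℂ} (hq : 0 < q.re) : IntegrableOn (twoExp p q) (Set.Iic 0) :=
  (integrableOn_exp_mul_complex_Iic hq 0).congr_fun twoExp_Iic.symm measurableSet_Iic

lemma twoExp_intOn2 {p q : ℂ} (hp : 0 < p.re) : IntegrableOn (twoExp p q) (Set.Ioi 0) :=
  (integrableOn_exp_mul_complex_Ioi (a := -p) (by simpa using hp) 0).congr_fun twoExp_Ioi.symm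
    measurableSet_Ioi

lemma twoExp_integrable {p q : ℂ} (hp : 0 < p.re) (hq : 0 < q.re) : Integrable (twoExp p q) := by
  have := (twoExp_intOn1 (p := p) hq).union (twoExp_intOn2 (q := q) hp)
  rwa [Set.Iic_union_Ioi, integrableOn_univ] at this

lemma twoExp_integral {p q : ℂ} (hp : 0 < p.re) (hq : 0 < q.re) :
    ∫ t, twoExp p q t = p⁻¹ + q⁻¹ := by
  rw [← intervalIntegral.integral_Iic_add_Ioi (twoExp_intOn1 hq) (twoExp_intOn2 hp),
    setIntegral_congr_fun measurableSet_Iic twoExp_Iic,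
    setIntegral_congr_fun measurableSet_Ioi twoExp_Ioi,
    integral_exp_mul_complex_Iic hq, integral_exp_mul_complex_Ioi (by simpa using hp)]
  simp [neg_div_neg_eq, add_comm]

lemma twoExp_mul (p q p' q' : ℂ) (t : ℝ) :
    twoExp p q t * twoExp p' q' t = twoExp (p + p') (q + q') t := by
  unfold twoExp
  split_ifs <;> rw [← Complex.exp_add] <;> congr 1 <;> ring

lemma twoExp_neg (p q : ℂ) (t : ℝ) : twoExp p q (-t) = twoExp q p t := by
  unfold twoExp
  rcases lt_trichotomy t 0 with h | h | h
  · have h1 : ¬ (-t ≤ 0) := by linarith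
    simp [h.le, h1]
  · simp [h]
  · have h1 : (-t ≤ 0) := by linarith
    simp [h1, h]

lemma twoExp_mul_exp (p q : ℂ) (a t : ℝ) :
    Complex.exp (-(Complex.I * a * t)) * twoExp p q t =
      twoExp (p + Complex.I * a) (q - Complex.I * a) t := by
  unfold twoExp
  split_ifs <;> rw [← Complex.exp_add] <;> congr 1 <;> ring

lemma ne_zero_of_re {z : ℂ} (h : 0 < z.re) : z ≠ 0 := by
  rintro rfl; simp at h

lemma kerK_eq {p q : ℂ} (hp : 0 < p.re) (hq : 0 < q.re) (a : ℝ) :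
    ∫ t : ℝ, Complex.exp (-(Complex.I * a * t)) * twoExp p q t = (p + q) * kerK p q a := by
  simp_rw [twoExp_mul_exp]
  have h1 : 0 < (p + Complex.I * a).re := by simpa using hp
  have h2 : 0 < (q - Complex.I * a).re := by simpa using hq
  rw [twoExp_integral h1 h2, kerK]
  have := ne_zero_of_re h1
  have := ne_zero_of_re h2
  field_simp
  ring

lemma integrable_normsq {p : ℂ} (hp : 0 < p.re) :
    Integrable (fun a : ℝ => (‖p + Complex.I * a‖ ^ 2)⁻¹) := by
  have h := ((integrable_inv_one_add_sq.comp_div hp.ne').comp_add_left p.im).const_mul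
    ((p.re ^ 2)⁻¹)
  refine h.congr (Filter.Eventually.of_forall fun a => ?_)
  have : ‖p + Complex.I * a‖ ^ 2 = p.re ^ 2 + (p.im + a) ^ 2 := by
    rw [← Complex.normSq_eq_norm_sq, Complex.normSq_apply]; simp; ring
  simp only [this]
  rw [← mul_inv]
  congr 1
  field_simp

lemma kerK_continuous {p q : ℂ} (hp : 0 < p.re) (hq : 0 < q.re) : Continuous (kerK p q) := by
  unfold kerK
  refine Continuous.mul (Continuous.inv₀ (by fun_prop) fun a => ne_zero_of_re (by simpa using hp))
    (Continuous.inv₀ (by fun_prop) fun a => ne_zero_of_re (by simpa using hq))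

lemma kerK_integrable {p q : ℂ} (hp : 0 < p.re) (hq : 0 < q.re) : Integrable (kerK p q) := by
  have h1 := integrable_normsq hp
  have h2 := (integrable_normsq hq).comp_neg
  refine (h1.add h2).mono' (kerK_continuous hp hq).aestronglyMeasurable
    (Filter.Eventually.of_forall fun a => ?_)
  simp only [kerK, norm_mul, norm_inv, Pi.add_apply, ← inv_pow]
  have : q + Complex.I * ((-a : ℝ) : ℂ) = q - Complex.I * a := by push_cast; ring
  rw [this]
  nlinarith [sq_nonneg (‖p + Complex.I * a‖⁻¹ - ‖q - Complex.I * a‖⁻¹),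
    sq_nonneg (‖p + Complex.I * a‖⁻¹ + ‖q - Complex.I * a‖⁻¹)]

lemma fourier_twoExp {p q : ℂ} (hp : 0 < p.re) (hq : 0 < q.re) :
    𝓕 (twoExp p q) = fun w : ℝ => (p + q) * kerK p q (2 * Real.pi * w) := by
  ext w
  rw [Real.fourier_real_eq_integral_exp_smul, ← kerK_eq hp hq]
  congr 1
  ext t
  rw [smul_eq_mul]
  congr 2
  push_cast
  ring

lemma kerK_inv {p q : ℂ} (hp : 0 < p.re) (hq : 0 < q.re) (u : ℝ) :
    ∫ a : ℝ, kerK p q a * Complex.exp (-(Complex.I * a * u)) =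
      2 * Real.pi * (p + q)⁻¹ * twoExp q p u := by
  have hpi : (0 : ℝ) < 2 * Real.pi := by positivity
  have hpq : p + q ≠ 0 := ne_zero_of_re (by simpa using add_pos hp hq)
  have hint : Integrable (𝓕 (twoExp p q)) := by
    rw [fourier_twoExp hp hq]
    exact ((kerK_integrable hp hq).comp_mul_left' hpi.ne').const_mul _
  have h := congrFun ((twoExp_continuous p q).fourierInv_fourier_eq
    (twoExp_integrable hp hq) hint) (-u)
  rw [Real.fourierInv_eq', fourier_twoExp hp hq, twoExp_neg] at h
  have h2 := Measure.integral_comp_mul_left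
    (fun a : ℝ => kerK p q a * Complex.exp (-(Complex.I * a * u))) (2 * Real.pi)
  rw [abs_of_pos (inv_pos.mpr hpi)] at h2
  have h3 : (p + q) * ∫ x : ℝ, kerK p q (2 * Real.pi * x) *
      Complex.exp (-(Complex.I * ((2 * Real.pi * x : ℝ) : ℂ) * u)) = twoExp q p u := by
    rw [← h, ← integral_const_mul]
    congr 1
    ext x
    have hexp : Complex.exp (((2 * Real.pi * inner ℝ x (-u) : ℝ) : ℂ) * Complex.I) =
        Complex.exp (-(Complex.I * ((2 * Real.pi * x : ℝ) : ℂ) * u)) := by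
      congr 1
      simp
      ring
    rw [smul_eq_mul, hexp]
    ring
  rw [h2, Complex.real_smul] at h3
  rw [← h3]
  have : (Real.pi : ℂ) ≠ 0 := by exact_mod_cast Real.pi_ne_zero
  generalize (∫ y : ℝ, kerK p q y * Complex.exp (-(Complex.I * y * u))) = J
  push_cast
  field_simp

/-- the X-function of the cone of effective divisors of the split toric
Del Pezzo surface of degree 6, computed via
`X_{Λ_eff}(ψ(s)) = (2π)^{-2} ∫_{M_ℝ} ∏_j (s_j + i y_j)^{-1} dy`, where `M_ℝ` is
parametrized by `(a,b) ↦ a·γ₁ + b·γ₂` (normalizing the measure by the lattice `M`),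
equals the stated rational function. -/
theorem XFunction_delPezzo_degree_six (s : Fin 6 → ℂ) (hs : ∀ i, 0 < (s i).re) :
    ((1 / (2 * Real.pi) ^ 2 : ℝ) : ℂ) *
      ∫ y : ℝ × ℝ, ∏ j, (s j + Complex.I * ((y.1 * gammaOne j + y.2 * gammaTwo j : ℝ) : ℂ))⁻¹
    = (s 0 + s 1 + s 2 + s 3 + s 4 + s 5) /
        ((s 0 + s 5) * (s 1 + s 4) * (s 2 + s 3) * (s 0 + s 1 + s 2) *
          (s 3 + s 4 + s 5)) := by
  have hne : ∀ i j, s i + s j ≠ 0 := fun i j =>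
    ne_zero_of_re (by simpa using add_pos (hs i) (hs j))
  have hp012 : 0 < (s 0 + s 1 + s 2).re := by
    simpa using add_pos (add_pos (hs 0) (hs 1)) (hs 2)
  have hp345 : 0 < (s 5 + s 4 + s 3).re := by
    simpa using add_pos (add_pos (hs 5) (hs 4)) (hs 3)
  have e1 : ∀ y : ℝ × ℝ,
      ∏ j, (s j + Complex.I * ((y.1 * gammaOne j + y.2 * gammaTwo j : ℝ) : ℂ))⁻¹ =
      (s 0 + s 5)⁻¹ * ∫ u : ℝ, (kerK (s 4) (s 1) y.1 * kerK (s 3) (s 2) y.2) *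
        (Complex.exp (-(Complex.I * ((y.1 + y.2 : ℝ) : ℂ) * u)) * twoExp (s 0) (s 5) u) := by
    intro y
    rw [integral_const_mul, kerK_eq (hs 0) (hs 5)]
    have : (s 0 + s 5)⁻¹ * (kerK (s 4) (s 1) y.1 * kerK (s 3) (s 2) y.2 *
        ((s 0 + s 5) * kerK (s 0) (s 5) (y.1 + y.2))) =
        kerK (s 4) (s 1) y.1 * kerK (s 3) (s 2) y.2 * kerK (s 0) (s 5) (y.1 + y.2) := by
      field_simp [hne 0 5]
    rw [this]
    simp only [Fin.prod_univ_six, gammaOne, gammaTwo, kerK]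
    simp [-mul_inv_rev]
    simp only [← sub_eq_add_neg, mul_add, mul_sub, mul_neg]
    rw [show s 5 + (-(Complex.I * (y.1 : ℂ)) - Complex.I * y.2) =
      s 5 - (Complex.I * (y.1 : ℂ) + Complex.I * y.2) by ring]
    ring
  simp_rw [e1]
  rw [integral_const_mul]
  have hint : Integrable (Function.uncurry fun (y : ℝ × ℝ) (u : ℝ) =>
      (kerK (s 4) (s 1) y.1 * kerK (s 3) (s 2) y.2) *
        (Complex.exp (-(Complex.I * ((y.1 + y.2 : ℝ) : ℂ) * u)) * twoExp (s 0) (s 5) u))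
      ((volume : Measure (ℝ × ℝ)).prod volume) := by
    have hb := ((kerK_integrable (hs 4) (hs 1)).mul_prod (kerK_integrable (hs 3) (hs 2))).mul_prod
      (twoExp_integrable (hs 0) (hs 5))
    refine hb.mono ?_ (Filter.Eventually.of_forall fun z => ?_)
    · apply Continuous.aestronglyMeasurable
      have c1 := kerK_continuous (hs 4) (hs 1)
      have c2 := kerK_continuous (hs 3) (hs 2)
      have c3 := twoExp_continuous (s 0) (s 5)
      unfold Function.uncurry
      fun_prop
    · simp only [Function.uncurry, norm_mul]
      rw [Complex.norm_exp]
      simp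
  rw [integral_integral_swap hint]
  have e2 : ∀ u : ℝ, ∫ y : ℝ × ℝ, (kerK (s 4) (s 1) y.1 * kerK (s 3) (s 2) y.2) *
        (Complex.exp (-(Complex.I * ((y.1 + y.2 : ℝ) : ℂ) * u)) * twoExp (s 0) (s 5) u) =
      ((2 * Real.pi) ^ 2 * (s 4 + s 1)⁻¹ * (s 3 + s 2)⁻¹) *
        twoExp (s 0 + s 1 + s 2) (s 5 + s 4 + s 3) u := by
    intro u
    have : ∀ y : ℝ × ℝ, (kerK (s 4) (s 1) y.1 * kerK (s 3) (s 2) y.2) *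
        (Complex.exp (-(Complex.I * ((y.1 + y.2 : ℝ) : ℂ) * u)) * twoExp (s 0) (s 5) u) =
        ((kerK (s 4) (s 1) y.1 * Complex.exp (-(Complex.I * y.1 * u))) *
        (kerK (s 3) (s 2) y.2 * Complex.exp (-(Complex.I * y.2 * u)))) *
          twoExp (s 0) (s 5) u := by
      intro y
      have : Complex.exp (-(Complex.I * ((y.1 + y.2 : ℝ) : ℂ) * u)) =
        Complex.exp (-(Complex.I * y.1 * u)) * Complex.exp (-(Complex.I * y.2 * u)) := by
        rw [← Complex.exp_add]; congr 1; push_cast; ring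
      rw [this]; ring
    simp_rw [this]
    rw [integral_mul_const, Measure.volume_eq_prod,
      integral_prod_mul (fun a : ℝ => kerK (s 4) (s 1) a * Complex.exp (-(Complex.I * a * u)))
        (fun a : ℝ => kerK (s 3) (s 2) a * Complex.exp (-(Complex.I * a * u))),
      kerK_inv (hs 4) (hs 1), kerK_inv (hs 3) (hs 2), ← twoExp_mul, ← twoExp_mul]
    ring
  simp_rw [e2]
  rw [integral_const_mul, twoExp_integral hp012 hp345]
  have hpi : (Real.pi : ℂ) ≠ 0 := by exact_mod_cast Real.pi_ne_zero
  have n1 := ne_zero_of_re hp012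
  have n2 := ne_zero_of_re hp345
  have n3 : s 3 + s 4 + s 5 ≠ 0 := by
    intro h; apply n2; rw [← h]; ring
  rw [show s 5 + s 4 + s 3 = s 3 + s 4 + s 5 by ring, add_comm (s 4) (s 1), add_comm (s 3) (s 2)]
  have := hne 0 5
  have := hne 1 4
  have := hne 2 3
  push_cast
  field_simp
  ring
end

section
/- Let Λ_eff ⊂ ℝ^k be a full-dimensional finitely generated rational polyhedral cone with Λ_eff ∩ (−Λ_eff) = {0}, and let κ be a point in the interior of Λ_eff. Then α := X_{Λ_eff}(κ) = ∫_{Λ_eff^*} e^{-⟨κ,y⟩} dy is a positive rational number times the covolume normalization, i.e., if κ and the generators of Λ_eff are rational, then α ∈ ℚ_{>0}. -/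
open MeasureTheory

namespace XRat

/-- rational affine function -/
noncomputable def aff {k : ℕ} (a : Fin k → ℚ) (b : ℚ) (y : Fin k → ℝ) : ℝ :=
  ∑ i, (a i : ℝ) * y i + b

/-- rational piecewise polynomial functions -/
inductive PP {k : ℕ} : ((Fin k → ℝ) → ℝ) → Prop
  | aff (a : Fin k → ℚ) (b : ℚ) : PP (aff a b)
  | heav (a : Fin k → ℚ) (b : ℚ) : PP (fun y => if 0 ≤ XRat.aff a b y then 1 else 0)
  | add {f g} : PP f → PP g → PP (fun y => f y + g y)
  | mul {f g} : PP f → PP g → PP (fun y => f y * g y)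

theorem PP.const {k : ℕ} (q : ℚ) : PP (fun _ : Fin k → ℝ => (q : ℝ)) := by
  have := PP.aff (k := k) 0 q
  convert this using 2
  simp [XRat.aff]

theorem PP.one {k : ℕ} : PP (fun _ : Fin k → ℝ => (1 : ℝ)) := by
  simpa using PP.const (k := k) 1

theorem PP.neg {k : ℕ} {f : (Fin k → ℝ) → ℝ} (hf : PP f) : PP (fun y => - f y) := by
  have := (PP.const (k := k) (-1)).mul hf
  simpa using this

theorem PP.sub {k : ℕ} {f g : (Fin k → ℝ) → ℝ} (hf : PP f) (hg : PP g) :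
    PP (fun y => f y - g y) := by
  simpa [sub_eq_add_neg] using hf.add hg.neg

theorem PP.pow {k : ℕ} {f : (Fin k → ℝ) → ℝ} (hf : PP f) (n : ℕ) : PP (fun y => f y ^ n) := by
  induction n with
  | zero => simpa using PP.one
  | succ n ih => simpa [pow_succ] using ih.mul hf

theorem PP.prod {k n : ℕ} {f : Fin n → (Fin k → ℝ) → ℝ} (hf : ∀ j, PP (f j)) :
    PP (fun y => ∏ j, f j y) := by
  induction n with
  | zero => simpa using PP.one
  | succ n ih => 
    simp only [Fin.prod_univ_succ]
    exact (hf 0).mul (ih fun j => hf j.succ)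

theorem aff_sub {k : ℕ} (a a' : Fin k → ℚ) (b b' : ℚ) (y : Fin k → ℝ) :
    aff (a - a') (b - b') y = aff a b y - aff a' b' y := by
  simp [aff, sub_mul, Finset.sum_sub_distrib]; ring

theorem PP.le {k : ℕ} (a a' : Fin k → ℚ) (b b' : ℚ) :
    PP (fun y => if XRat.aff a b y ≤ XRat.aff a' b' y then 1 else 0) := by
  have := PP.heav (a' - a) (b' - b)
  simpa [aff_sub] using this

theorem PP.lt {k : ℕ} (a a' : Fin k → ℚ) (b b' : ℚ) :
    PP (fun y => if XRat.aff a b y < XRat.aff a' b' y then 1 else 0) := by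
  have := PP.one.sub (PP.le a' a b' b)
  convert this using 2
  split_ifs <;> first | (simp; done) | (exfalso; linarith)

inductive Step {k : ℕ} : (ℝ → (Fin k → ℝ) → ℝ) → Prop
  | one : Step (fun _ _ => 1)
  | le (a : Fin k → ℚ) (b : ℚ) : Step (fun t y => if aff a b y ≤ t then 1 else 0)
  | lt (a : Fin k → ℚ) (b : ℚ) : Step (fun t y => if aff a b y < t then 1 else 0)

theorem Step.mul {k : ℕ} {s s' : ℝ → (Fin k → ℝ) → ℝ} (h : Step s) (h' : Step s') :
    ∃ d, PP d ∧ ∀ t y, s t y * s' t y = d y * s t y + (1 - d y) * s' t y := by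
  cases h with
  | one => exact ⟨_, PP.const 0, fun t y => by simp⟩
  | le a b =>
    cases h' with
    | one => exact ⟨_, PP.one, fun t y => by simp⟩
    | le a' b' =>
      refine ⟨_, PP.le a' a b' b, fun t y => ?_⟩
      dsimp only
      split_ifs <;> first | (simp; done) | (exfalso; linarith)
    | lt a' b' =>
      refine ⟨_, PP.lt a' a b' b, fun t y => ?_⟩
      dsimp only
      split_ifs <;> first | (simp; done) | (exfalso; linarith)
  | lt a b =>
    cases h' with
    | one => exact ⟨_, PP.one, fun t y => by simp⟩
    | le a' b' =>
      refine ⟨_, PP.le a' a b' b, fun t y => ?_⟩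
      dsimp only
      split_ifs <;> first | (simp; done) | (exfalso; linarith)
    | lt a' b' =>
      refine ⟨_, PP.le a' a b' b, fun t y => ?_⟩
      dsimp only
      split_ifs <;> first | (simp; done) | (exfalso; linarith)

inductive MM {k : ℕ} : (ℝ → (Fin k → ℝ) → ℝ) → Prop
  | gen {c s} (n : ℕ) : PP c → Step s → MM (fun t y => c y * t ^ n * s t y)
  | add {f g} : MM f → MM g → MM (fun t y => f t y + g t y)

theorem MM.mul {k : ℕ} {f g : ℝ → (Fin k → ℝ) → ℝ} (hf : MM f) (hg : MM g) :
    MM (fun t y => f t y * g t y) := by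
  induction hf with
  | add _ _ h1 h2 => simpa only [add_mul] using h1.add h2
  | @gen c s n hc hs =>
    induction hg with
    | add _ _ h1 h2 => simpa only [mul_add] using h1.add h2
    | @gen c' s' n' hc' hs' =>
      obtain ⟨d, hd, h⟩ := hs.mul hs'
      have h1 := MM.gen (n + n') ((hc.mul hc').mul hd) hs
      have h2 := MM.gen (n + n') ((hc.mul hc').mul (PP.one.sub hd)) hs'
      convert h1.add h2 using 3 with t y
      rw [pow_add]
      linear_combination (c y * c' y * t ^ n * t ^ n') * h t y

theorem MM.base {k : ℕ} {c : (Fin k → ℝ) → ℝ} (hc : PP c) : MM (fun _ y => c y) := by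
  simpa using MM.gen 0 hc Step.one

theorem aff_cons {k : ℕ} (a : Fin (k+1) → ℚ) (b : ℚ) (t : ℝ) (y : Fin k → ℝ) :
    aff a b (Fin.cons t y) = a 0 * t + aff (Fin.tail a) b y := by
  simp [aff, Fin.sum_univ_succ, Fin.tail, add_assoc]

theorem aff_smul {k : ℕ} (q : ℚ) (a : Fin k → ℚ) (b : ℚ) (y : Fin k → ℝ) :
    aff (q • a) (q * b) y = q * aff a b y := by
  simp [aff, mul_add, Finset.mul_sum, mul_assoc]

theorem PP.toMM {k : ℕ} {f : (Fin (k+1) → ℝ) → ℝ} (hf : PP f) :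
    MM (fun t (y : Fin k → ℝ) => f (Fin.cons t y)) := by
  induction hf with
  | add _ _ h1 h2 => exact h1.add h2
  | mul _ _ h1 h2 => exact h1.mul h2
  | aff a b =>
    simp only [aff_cons]
    refine MM.add ?_ (MM.base (PP.aff _ _))
    simpa using MM.gen 1 (PP.const (a 0)) Step.one
  | heav a b =>
    simp only [aff_cons]
    rcases lt_trichotomy (a 0) 0 with h | h | h
    · have h1 := MM.gen 0 (PP.const (-1)) (Step.lt (-(a 0)⁻¹ • Fin.tail a) (-(a 0)⁻¹ * b))
      convert (MM.base PP.one).add h1 using 3 with t y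
      rw [aff_smul]
      have h' : ((a 0 : ℚ) : ℝ) < 0 := by exact_mod_cast h
      have : ((-(a 0)⁻¹ : ℚ) : ℝ) * XRat.aff (Fin.tail a) b y < t ↔
          ¬ 0 ≤ a 0 * t + XRat.aff (Fin.tail a) b y := by
        push_cast
        rw [neg_mul, inv_mul_eq_div, neg_lt, lt_div_iff_of_neg h', not_le] 
        constructor <;> intro <;> linarith
      simp only [this]
      split_ifs <;> simp
    · simpa [h] using MM.base (PP.heav (Fin.tail a) b)
    · have h1 := MM.gen 0 PP.one (Step.le (-(a 0)⁻¹ • Fin.tail a) (-(a 0)⁻¹ * b))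
      convert h1 using 3 with t y
      rw [aff_smul]
      have h' : 0 < ((a 0 : ℚ) : ℝ) := by exact_mod_cast h
      have : ((-(a 0)⁻¹ : ℚ) : ℝ) * XRat.aff (Fin.tail a) b y ≤ t ↔
          0 ≤ a 0 * t + XRat.aff (Fin.tail a) b y := by
        push_cast
        rw [neg_mul, inv_mul_eq_div, neg_le, le_div_iff₀ h'] 
        constructor <;> intro <;> linarith
      simp only [this]
      simp

/-- Lebesgue measure on the interval `(-N, N]` -/
noncomputable def mu (N : ℕ) : Measure ℝ := volume.restrict (Set.Ioc (-(N:ℝ)) N)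

instance (N : ℕ) : IsFiniteMeasure (mu N) := by unfold mu; infer_instance

theorem mu_one (N n : ℕ) : Integrable (fun t : ℝ => t ^ n) (mu N) ∧
    ∃ q : ℚ, ∫ t, t ^ n ∂(mu N) = q := by
  have hN : -(N:ℝ) ≤ N := by linarith [(Nat.cast_nonneg N : (0:ℝ) ≤ N)]
  refine ⟨?_, ((N:ℚ)^(n+1) - (-N)^(n+1))/(n+1), ?_⟩
  · have := (continuous_pow (M := ℝ) n).intervalIntegrable (μ := volume) (-(N:ℝ)) N
    rwa [intervalIntegrable_iff_integrableOn_Ioc_of_le hN] at this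
  · rw [mu, ← intervalIntegral.integral_of_le hN, integral_pow]
    push_cast; rfl

theorem mu_lt (N n : ℕ) (l m : ℝ) (hm : m = max (-(N:ℝ)) (min l N)) :
    Integrable (fun t : ℝ => t ^ n * (if l < t then 1 else 0)) (mu N) ∧
    ∫ t, t ^ n * (if l < t then 1 else 0) ∂(mu N) = (N ^ (n+1) - m ^ (n+1)) / (n+1) := by
  have hN : -(N:ℝ) ≤ N := by linarith [(Nat.cast_nonneg N : (0:ℝ) ≤ N)]
  have e : (fun t : ℝ => t ^ n * (if l < t then 1 else 0)) =
      (Set.Ioi l).indicator (fun t => t ^ n) := by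
    ext t; simp [Set.indicator_apply]
  have hmN : m ≤ N := by rw [hm]; simp [hN]
  rw [e]
  refine ⟨(mu_one N n).1.indicator measurableSet_Ioi, ?_⟩
  rw [integral_indicator measurableSet_Ioi, mu, Measure.restrict_restrict measurableSet_Ioi]
  have : Set.Ioi l ∩ Set.Ioc (-(N:ℝ)) N = Set.Ioc m N := by
    ext t
    simp only [Set.mem_inter_iff, Set.mem_Ioi, Set.mem_Ioc, hm, max_lt_iff, min_lt_iff]
    constructor
    · rintro ⟨h1, h2, h3⟩; exact ⟨⟨h2, Or.inl h1⟩, h3⟩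
    · rintro ⟨⟨h1, h2⟩, h3⟩
      exact ⟨h2.resolve_right (not_lt.2 h3), h1, h3⟩
  rw [this, ← intervalIntegral.integral_of_le hmN, integral_pow]

theorem mu_le (N n : ℕ) (l m : ℝ) (hm : m = max (-(N:ℝ)) (min l N)) :
    Integrable (fun t : ℝ => t ^ n * (if l ≤ t then 1 else 0)) (mu N) ∧
    ∫ t, t ^ n * (if l ≤ t then 1 else 0) ∂(mu N) = (N ^ (n+1) - m ^ (n+1)) / (n+1) := by
  have e : (fun t : ℝ => t ^ n * (if l < t then 1 else 0)) =ᵐ[mu N]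
      (fun t : ℝ => t ^ n * (if l ≤ t then 1 else 0)) := by
    apply ae_restrict_of_ae
    have : ∀ᵐ t : ℝ, t ≠ l := by simp [ae_iff]
    filter_upwards [this] with t ht
    simp [lt_iff_le_and_ne, ht.symm]
  obtain ⟨h1, h2⟩ := mu_lt N n l m hm
  exact ⟨h1.congr e, by rw [← integral_congr_ae e, h2]⟩

theorem PP.clamp {k : ℕ} (N : ℕ) (a : Fin k → ℚ) (b : ℚ) :
    PP (fun y => max (-(N:ℝ)) (min (XRat.aff a b y) N)) := by
  have h1 := PP.le 0 a (-N) b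
  have h2 := PP.le a 0 b N
  have hN : (0:ℝ) ≤ N := Nat.cast_nonneg N
  convert ((h1.mul h2).mul (PP.aff a b)).add
    (((PP.one.sub h2).mul (PP.const N)).add ((PP.one.sub h1).mul (PP.const (-N)))) using 2 with y
  simp only [XRat.aff, Pi.zero_apply, Rat.cast_zero, zero_mul, Finset.sum_const_zero, zero_add]
  push_cast
  split_ifs with h h' h'
  · simp [h, h']
  · rw [min_eq_right (by linarith), max_eq_right (by linarith)]; simp
  · rw [min_eq_left (by linarith), max_eq_left (by linarith)]; simp
  · exfalso; linarith

theorem MM.integral {k : ℕ} {f : ℝ → (Fin k → ℝ) → ℝ} (hf : MM f) (N : ℕ) :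
    (∀ y, Integrable (fun t => f t y) (mu N)) ∧ PP (fun y => ∫ t, f t y ∂(mu N)) := by
  induction hf with
  | add _ _ h1 h2 =>
    refine ⟨fun y => (h1.1 y).add (h2.1 y), ?_⟩
    convert h1.2.add h2.2 using 2 with y
    exact integral_add (h1.1 y) (h2.1 y)
  | @gen c s n hc hs =>
    simp only [mul_assoc]
    suffices h : (∀ y, Integrable (fun t => t ^ n * s t y) (mu N)) ∧
        PP (fun y => ∫ t, t ^ n * s t y ∂(mu N)) by
      refine ⟨fun y => (h.1 y).const_mul _, ?_⟩
      simp only [integral_const_mul]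
      exact hc.mul h.2
    have key : ∀ a b, PP (fun y : Fin k → ℝ => 
        ((N:ℝ) ^ (n+1) - (max (-(N:ℝ)) (min (XRat.aff a b y) N)) ^ (n+1)) / (n+1)) := by
      intro a b
      have := ((PP.const (k := k) (N ^ (n+1))).sub ((PP.clamp N a b).pow (n+1))).mul
        (PP.const (1 / (n+1)))
      convert this using 2
      push_cast
      ring
    cases hs with
    | one =>
      simp only [mul_one]
      obtain ⟨h, q, hq⟩ := mu_one N n
      exact ⟨fun _ => h, by rw [hq]; exact PP.const q⟩
    | le a b =>
      refine ⟨fun y => (mu_le N n _ _ rfl).1, ?_⟩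
      simp only [(mu_le N n _ _ rfl).2]
      exact key a b
    | lt a b =>
      refine ⟨fun y => (mu_lt N n _ _ rfl).1, ?_⟩
      simp only [(mu_lt N n _ _ rfl).2]
      exact key a b

theorem measurable_aff {k : ℕ} (a : Fin k → ℚ) (b : ℚ) : Measurable (aff a b) := by
  unfold aff; fun_prop

theorem PP.measurable {k : ℕ} {f : (Fin k → ℝ) → ℝ} (hf : PP f) : Measurable f := by
  induction hf with
  | add _ _ h1 h2 => exact h1.add h2
  | mul _ _ h1 h2 => exact h1.mul h2
  | aff a b => exact measurable_aff a b
  | heav a b =>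
    exact Measurable.ite (measurableSet_le measurable_const (measurable_aff a b))
      measurable_const measurable_const

theorem PP.bdd {k : ℕ} {f : (Fin k → ℝ) → ℝ} (hf : PP f) (N : ℕ) :
    ∃ C, ∀ y, (∀ i, |y i| ≤ (N:ℝ)) → |f y| ≤ C := by
  induction hf with
  | add _ _ h1 h2 =>
    obtain ⟨C, hC⟩ := h1
    obtain ⟨D, hD⟩ := h2
    exact ⟨C + D, fun y hy => (abs_add_le _ _).trans (add_le_add (hC y hy) (hD y hy))⟩
  | mul _ _ h1 h2 =>
    obtain ⟨C, hC⟩ := h1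
    obtain ⟨D, hD⟩ := h2
    refine ⟨C * D, fun y hy => ?_⟩
    rw [abs_mul]
    exact mul_le_mul (hC y hy) (hD y hy) (abs_nonneg _) ((abs_nonneg _).trans (hC y hy))
  | aff a b =>
    refine ⟨∑ i, |(a i : ℝ)| * N + |(b:ℝ)|, fun y hy => ?_⟩
    refine (abs_add_le _ _).trans (add_le_add ((Finset.abs_sum_le_sum_abs _ _).trans ?_) le_rfl)
    refine Finset.sum_le_sum fun i _ => ?_
    rw [abs_mul]
    exact mul_le_mul_of_nonneg_left (hy i) (abs_nonneg _)
  | heav a b =>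
    refine ⟨1, fun y _ => ?_⟩
    dsimp only
    split_ifs <;> simp

theorem ae_box (k N : ℕ) : ∀ᵐ y ∂(Measure.pi fun _ : Fin k => mu N), ∀ i, |y i| ≤ (N:ℝ) := by
  unfold mu
  rw [← Measure.restrict_pi_pi]
  filter_upwards [ae_restrict_mem (MeasurableSet.univ_pi fun _ => measurableSet_Ioc)] with y hy i
  have := hy i (Set.mem_univ _)
  exact abs_le.2 ⟨this.1.le, this.2⟩

theorem PP.integrable {k : ℕ} {f : (Fin k → ℝ) → ℝ} (hf : PP f) (N : ℕ) :
    Integrable f (Measure.pi fun _ : Fin k => mu N) := by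
  obtain ⟨C, hC⟩ := hf.bdd N
  refine Integrable.of_bound hf.measurable.aestronglyMeasurable C ?_
  filter_upwards [ae_box k N] with y hy
  exact hC y hy

theorem PP.integral {k : ℕ} {f : (Fin k → ℝ) → ℝ} (hf : PP f) (N : ℕ) :
    ∃ q : ℚ, ∫ y, f y ∂(Measure.pi fun _ : Fin k => mu N) = q := by
  induction k with
  | zero =>
    have : ∃ q : ℚ, f default = q := by
      induction hf with
      | add _ _ h1 h2 =>
        obtain ⟨p, hp⟩ := h1
        obtain ⟨q, hq⟩ := h2
        exact ⟨p + q, by dsimp only; rw [hp, hq]; push_cast; rfl⟩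
      | mul _ _ h1 h2 =>
        obtain ⟨p, hp⟩ := h1
        obtain ⟨q, hq⟩ := h2
        exact ⟨p * q, by dsimp only; rw [hp, hq]; push_cast; rfl⟩
      | aff a b => exact ⟨b, by simp [XRat.aff]⟩
      | heav a b =>
        dsimp only
        split_ifs
        · exact ⟨1, by simp⟩
        · exact ⟨0, by simp⟩
    obtain ⟨q, hq⟩ := this
    refine ⟨q, ?_⟩
    rw [← hq, Measure.pi_of_empty (fun _ => mu N) default, integral_dirac]
  | succ k ih =>
    have hmp := (measurePreserving_piFinSuccAbove (fun _ : Fin (k+1) => mu N) 0).symm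
    obtain ⟨q, hq⟩ := ih (hf.toMM.integral N).2
    refine ⟨q, ?_⟩
    rw [← hq, ← hmp.integral_comp (MeasurableEquiv.measurableEmbedding _)]
    rw [integral_prod_symm]
    · simp [MeasurableEquiv.piFinSuccAbove, Fin.insertNthEquiv]
    · exact (hmp.integrable_comp_emb (MeasurableEquiv.measurableEmbedding _)).2 (hf.integrable N)

/-- the open-at-top slice of the cone -/
def slice {k n : ℕ} (g : Fin n → Fin k → ℚ) (κ : Fin k → ℚ) (t : ℝ) : Set (Fin k → ℝ) :=
  {y | (∀ j, 0 ≤ ∑ i, (g j i : ℝ) * y i) ∧ ∑ i, (κ i : ℝ) * y i < t}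

theorem measurableSet_cone {k n : ℕ} (g : Fin n → Fin k → ℚ) :
    MeasurableSet {y : Fin k → ℝ | ∀ j, 0 ≤ ∑ i, (g j i : ℝ) * y i} := by
  rw [Set.ofPred_forall]
  exact MeasurableSet.iInter fun j => measurableSet_le measurable_const (by fun_prop)

theorem measurableSet_slice {k n : ℕ} (g : Fin n → Fin k → ℚ) (κ : Fin k → ℚ) (t : ℝ) :
    MeasurableSet (slice g κ t) :=
  (measurableSet_cone g).inter (measurableSet_lt
    (f := fun y : Fin k → ℝ => ∑ i, (κ i : ℝ) * y i) (by fun_prop) measurable_const)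

theorem slice_volume_rat {k n : ℕ} (g : Fin n → Fin k → ℚ) (κ : Fin k → ℚ) (N : ℕ)
    (hN : ∀ y ∈ slice g κ 1, ∀ i, |y i| < N) :
    ∃ q : ℚ, volume (slice g κ 1) = ENNReal.ofReal q := by
  have hPP : PP (fun y : Fin k → ℝ => (∏ j, if 0 ≤ aff (g j) 0 y then (1:ℝ) else 0) *
      (if aff κ 0 y < aff 0 1 y then (1:ℝ) else 0)) :=
    (PP.prod fun j => PP.heav (g j) 0).mul (PP.lt κ 0 0 1)
  obtain ⟨q, hq⟩ := hPP.integral N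
  refine ⟨q, ?_⟩
  have e : (fun y : Fin k → ℝ => (∏ j, if 0 ≤ aff (g j) 0 y then (1:ℝ) else 0) *
      (if aff κ 0 y < aff 0 1 y then (1:ℝ) else 0)) = (slice g κ 1).indicator 1 := by
    ext y
    by_cases hy : y ∈ slice g κ 1
    · have h1 : ∀ j, 0 ≤ aff (g j) 0 y := fun j => by simpa [aff] using hy.1 j
      have h2 : aff κ 0 y < aff 0 1 y := by simpa [aff] using hy.2
      simp [hy, h1, h2]
    · rw [Set.indicator_of_notMem hy]
      by_contra hne
      apply hy
      have h2 := right_ne_zero_of_mul hne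
      have h1 := Finset.prod_ne_zero_iff.1 (left_ne_zero_of_mul hne)
      refine ⟨fun j => ?_, ?_⟩
      · have := h1 j (Finset.mem_univ _)
        simpa [aff] using this
      · simpa [aff] using h2
  rw [e, integral_indicator_one (measurableSet_slice g κ 1)] at hq
  have hfin : (Measure.pi fun _ : Fin k => mu N) (slice g κ 1) ≠ ⊤ := measure_ne_top _ _
  rw [← hq, Measure.real, ENNReal.ofReal_toReal hfin]
  unfold mu
  rw [← Measure.restrict_pi_pi, Measure.restrict_apply (measurableSet_slice g κ 1),
    Set.inter_eq_left.2, volume_pi]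
  intro y hy i _
  have := abs_lt.1 (hN y hy i)
  exact ⟨this.1, this.2.le⟩

open scoped Pointwise in
theorem slice_smul {k n : ℕ} (g : Fin n → Fin k → ℚ) (κ : Fin k → ℚ) {t : ℝ} (ht : 0 < t) :
    volume (slice g κ t) = ENNReal.ofReal (t ^ k) * volume (slice g κ 1) := by
  have : slice g κ t = t • slice g κ 1 := by
    ext y
    rw [Set.mem_smul_set_iff_inv_smul_mem₀ ht.ne']
    simp only [slice, Set.mem_ofPred_eq, Pi.smul_apply, smul_eq_mul, mul_left_comm _ t⁻¹,
      ← Finset.mul_sum]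
    simp only [inv_mul_eq_div, div_lt_one ht, le_div_iff₀ ht, zero_mul]
  rw [this, Measure.addHaar_smul]
  simp [abs_of_pos ht]

theorem cone_lintegral {k n : ℕ} (g : Fin n → Fin k → ℚ) (κ : Fin k → ℚ)
    (h0 : ∀ t ≤ 0, slice g κ t = ∅) :
    ∫⁻ y in {y : Fin k → ℝ | ∀ j, 0 ≤ ∑ i, (g j i : ℝ) * y i},
      ENNReal.ofReal (Real.exp (-∑ i, (κ i : ℝ) * y i)) =
    ENNReal.ofReal (k.factorial : ℝ) * volume (slice g κ 1) := by
  set C := {y : Fin k → ℝ | ∀ j, 0 ≤ ∑ i, (g j i : ℝ) * y i} with hC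
  have e1 : ∀ a : ℝ, ENNReal.ofReal (Real.exp (-a)) =
      ∫⁻ t : ℝ, if a < t then ENNReal.ofReal (Real.exp (-t)) else 0 := by
    intro a
    rw [← integral_exp_neg_Ioi a, ofReal_integral_eq_lintegral_ofReal (integrableOn_exp_neg_Ioi a)
      (Filter.Eventually.of_forall fun _ => (Real.exp_pos _).le),
      ← lintegral_indicator measurableSet_Ioi]
    rfl
  rw [lintegral_congr fun y : Fin k → ℝ => e1 (∑ i, (κ i : ℝ) * y i)]
  rw [lintegral_lintegral_swap]
  · have e2 : ∀ t : ℝ, (∫⁻ y in C, if ∑ i, (κ i : ℝ) * y i < t then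
        ENNReal.ofReal (Real.exp (-t)) else 0) =
        (Set.Ioi (0:ℝ)).indicator (fun t => ENNReal.ofReal (Real.exp (-t) * t ^ ((k:ℝ) + 1 - 1)) *
          volume (slice g κ 1)) t := by
      intro t
      have hm : MeasurableSet {y : Fin k → ℝ | ∑ i, (κ i : ℝ) * y i < t} :=
        measurableSet_lt (by fun_prop) measurable_const
      have : (fun y : Fin k → ℝ => if ∑ i, (κ i : ℝ) * y i < t then
        ENNReal.ofReal (Real.exp (-t)) else 0) =
        {y : Fin k → ℝ | ∑ i, (κ i : ℝ) * y i < t}.indicator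
          fun _ => ENNReal.ofReal (Real.exp (-t)) := rfl
      rw [this, lintegral_indicator_const hm, Measure.restrict_apply hm]
      have : {y : Fin k → ℝ | ∑ i, (κ i : ℝ) * y i < t} ∩ C = slice g κ t := Set.inter_comm _ _
      rw [this]
      by_cases ht : 0 < t
      · rw [Set.indicator_of_mem (Set.mem_Ioi.2 ht), slice_smul g κ ht, ← mul_assoc,
          ENNReal.ofReal_mul (Real.exp_pos _).le]
        simp
      · rw [h0 t (not_lt.1 ht), Set.indicator_of_notMem (by simpa using ht)]
        simp
    simp only [e2]
    have hk : (0:ℝ) < (k:ℝ) + 1 := by positivity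
    rw [lintegral_indicator measurableSet_Ioi, lintegral_mul_const, ← Real.Gamma_nat_eq_factorial,
      Real.Gamma_eq_integral hk,
      ofReal_integral_eq_lintegral_ofReal (Real.GammaIntegral_convergent hk)]
    · filter_upwards [ae_restrict_mem measurableSet_Ioi] with t ht
      have : (0:ℝ) < t := ht
      simp only [Pi.zero_apply]
      positivity
    · fun_prop
  · apply Measurable.aemeasurable
    apply Measurable.ite
    · exact measurableSet_lt (by fun_prop) (by fun_prop)
    · fun_prop
    · fun_prop

theorem exists_pos {k n : ℕ} (G : Fin n → Fin k → ℝ) (Λ : Set (Fin k → ℝ))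
    (hΛ : Λ = {x | ∃ c : Fin n → ℝ, (∀ j, 0 ≤ c j) ∧ x = ∑ j, c j • G j})
    (hsal : Λ ∩ (-Λ) = {0}) :
    ∃ y : Fin k → ℝ, ∀ j, G j ≠ 0 → 0 < ∑ i, G j i * y i := by
  classical
  have hmem : ∀ j, G j ∈ Λ := fun j => by
    rw [hΛ]
    refine ⟨Pi.single j 1, fun i => ?_, ?_⟩
    · by_cases h : i = j
      · subst h; simp
      · simp [h]
    · simp [Pi.single_apply, ite_smul]
  have hsmul : ∀ (r : ℝ) (x), 0 ≤ r → x ∈ Λ → r • x ∈ Λ := by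
    rw [hΛ]
    rintro r x hr ⟨c, hc, rfl⟩
    exact ⟨fun j => r * c j, fun j => mul_nonneg hr (hc j), by simp [Finset.smul_sum, mul_smul]⟩
  have hzero : (0 : Fin k → ℝ) ∈ Λ := by
    rw [hΛ]; exact ⟨0, fun _ => le_rfl, by simp⟩
  have hadd : ∀ x y, x ∈ Λ → y ∈ Λ → x + y ∈ Λ := by
    rw [hΛ]
    rintro x y ⟨c, hc, rfl⟩ ⟨d, hd, rfl⟩
    exact ⟨fun j => c j + d j, fun j => add_nonneg (hc j) (hd j),
      by simp [add_smul, Finset.sum_add_distrib]⟩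
  set T : Finset (Fin k → ℝ) := (Finset.univ.image G).filter (· ≠ 0) with hT
  have hTΛ : ∀ x ∈ T, x ∈ Λ := by
    intro x hx
    simp only [hT, Finset.mem_filter, Finset.mem_image, Finset.mem_univ, true_and] at hx
    obtain ⟨⟨j, rfl⟩, _⟩ := hx
    exact hmem j
  have hnot : (0 : Fin k → ℝ) ∉ convexHull ℝ (T : Set (Fin k → ℝ)) := by
    rw [Finset.mem_convexHull']
    rintro ⟨w, hw, hw1, hw0⟩
    obtain ⟨x, hx, hwx⟩ : ∃ x ∈ T, w x ≠ 0 := by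
      apply Finset.exists_ne_zero_of_sum_ne_zero
      rw [hw1]; exact one_ne_zero
    have h1 : w x • x ∈ Λ := hsmul _ _ (hw x hx) (hTΛ x hx)
    have h2 : ∑ z ∈ T.erase x, w z • z ∈ Λ := by
      refine Finset.sum_induction _ (· ∈ Λ) (fun a b => hadd a b) hzero fun z hz => ?_
      have := Finset.mem_of_mem_erase hz
      exact hsmul _ _ (hw z this) (hTΛ z this)
    have h3 : - (w x • x) = ∑ z ∈ T.erase x, w z • z := by
      rw [← Finset.add_sum_erase _ _ hx] at hw0
      exact neg_eq_of_add_eq_zero_right hw0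
    have h4 : w x • x ∈ Λ ∩ (-Λ) := ⟨h1, by rw [Set.mem_neg, h3]; exact h2⟩
    rw [hsal, Set.mem_singleton_iff, smul_eq_zero] at h4
    exact (Finset.mem_filter.1 hx).2 (h4.resolve_left hwx)
  obtain ⟨f, u, hu, hf⟩ := geometric_hahn_banach_point_closed (convex_convexHull ℝ _)
    (T.finite_toSet.isClosed_convexHull (𝕜 := ℝ)) hnot
  refine ⟨fun i => f (Pi.single i 1), fun j hj => ?_⟩
  have h1 := hf (G j) (subset_convexHull ℝ _ (by simp [hT, hj]))
  rw [map_zero] at hu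
  have h2 : f (G j) = ∑ i, G j i * f (Pi.single i 1) := by
    conv_lhs => rw [← Finset.univ_sum_single (G j)]
    rw [map_sum]
    refine Finset.sum_congr rfl fun i _ => ?_
    rw [← smul_eq_mul, ← map_smul, ← Pi.single_smul]
    simp
  linarith

end XRat

/-- for a full-dimensional finitely generated *rational* polyhedral cone
`Λ_eff ⊆ ℝ^k` with `Λ_eff ∩ (−Λ_eff) = {0}` and a rational interior point `κ`, the
value `α = X_{Λ_eff}(κ) = ∫_{Λ_eff^*} e^{-⟨κ,y⟩} dy` is a positive rational number. -/
theorem XFunction_rational_value (k n : ℕ) (hk : 0 < k) (g : Fin n → Fin k → ℚ)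
    (Λ : Set (Fin k → ℝ))
    (hΛ : Λ = {x | ∃ c : Fin n → ℝ, (∀ j, 0 ≤ c j) ∧
      x = ∑ j, c j • fun i => ((g j i : ℝ))})
    (hsal : Λ ∩ (-Λ) = {0}) (hfull : (interior Λ).Nonempty)
    (κ : Fin k → ℚ) (hκ : (fun i => ((κ i : ℝ))) ∈ interior Λ) :
    ∃ q : ℚ, 0 < q ∧
      (∫ y in dualCone Λ, Real.exp (-∑ i, (κ i : ℝ) * y i)) = (q : ℝ) := by
  classical
  have hC : dualCone Λ = {y : Fin k → ℝ | ∀ j, 0 ≤ ∑ i, (g j i : ℝ) * y i} := by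
    ext y
    simp only [dualCone, Set.mem_ofPred_eq]
    constructor
    · intro h j
      refine h (fun i => (g j i : ℝ)) ?_
      rw [hΛ]
      refine ⟨Pi.single j 1, fun i => ?_, ?_⟩
      · by_cases h : i = j
        · subst h; simp
        · simp [h]
      · simp [Pi.single_apply, ite_smul]
    · intro h x hx
      rw [hΛ] at hx
      obtain ⟨c, hc, rfl⟩ := hx
      have : ∑ i, (∑ j, c j • fun i => ((g j i : ℝ))) i * y i =
          ∑ j, c j * ∑ i, (g j i : ℝ) * y i := by
        simp only [Finset.sum_apply, Pi.smul_apply, smul_eq_mul, Finset.sum_mul, Finset.mul_sum]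
        rw [Finset.sum_comm]
        simp only [mul_assoc]
      rw [this]
      exact Finset.sum_nonneg fun j _ => mul_nonneg (hc j) (h j)
  -- boundedness
  obtain ⟨ε, hε, hball⟩ := Metric.isOpen_iff.1 isOpen_interior _ hκ
  have hbd : ∀ y ∈ dualCone Λ, ∀ i, ε / 2 * |y i| ≤ ∑ i, (κ i : ℝ) * y i := by
    intro y hy i
    have key : ∀ s : ℝ, |s| < ε → 0 ≤ ∑ i, (κ i : ℝ) * y i + s * y i := by
      intro s hs
      have h1 : (fun i => ((κ i : ℝ))) + Pi.single i s ∈ Λ := by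
        apply interior_subset
        apply hball
        rw [Metric.mem_ball, dist_eq_norm, add_sub_cancel_left, Pi.norm_single]
        exact hs
      have := hy _ h1
      simpa [add_mul, Finset.sum_add_distrib, Pi.single_apply, ite_mul] using this
    have h1 := key (ε / 2) (by rw [abs_of_pos] <;> linarith)
    have h2 := key (-(ε / 2)) (by rw [abs_neg, abs_of_pos] <;> linarith)
    rcases abs_cases (y i) with ⟨h, _⟩ | ⟨h, _⟩ <;> rw [h] <;> linarith
  have hnn : ∀ y ∈ dualCone Λ, 0 ≤ ∑ i, (κ i : ℝ) * y i := by
    intro y hy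
    exact le_trans (by positivity) (hbd y hy ⟨0, hk⟩)
  have h0 : ∀ t ≤ 0, XRat.slice g κ t = ∅ := by
    intro t ht
    ext y
    simp only [Set.mem_empty_iff_false, iff_false]
    intro hy
    have := hnn y (by rw [hC]; exact hy.1)
    linarith [hy.2]
  obtain ⟨N, hN⟩ := exists_nat_gt (2 / ε)
  obtain ⟨q, hq⟩ := XRat.slice_volume_rat g κ N (by
    intro y hy i
    have h1 := hbd y (by rw [hC]; exact hy.1) i
    have h2 := hy.2
    refine lt_trans ?_ hN
    rw [lt_div_iff₀ hε]
    linarith)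
  -- positivity
  have hpos : 0 < volume (XRat.slice g κ 1) := by
    obtain ⟨y, hy⟩ := XRat.exists_pos (fun j i => (g j i : ℝ)) Λ hΛ hsal
    let U : Set (Fin k → ℝ) := (⋂ j, {y | (fun i => (g j i : ℝ)) ≠ 0 →
      0 < ∑ i, (g j i : ℝ) * y i}) ∩ {y | ∑ i, (κ i : ℝ) * y i < 1}
    have hUo : IsOpen U := by
      refine IsOpen.inter (isOpen_iInter_of_finite fun j => ?_)
        (isOpen_lt (by fun_prop) continuous_const)
      by_cases h : (fun i => (g j i : ℝ)) = 0
      · simp [h]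
      · simp only [ne_eq, h, not_false_eq_true, true_imp_iff]
        exact isOpen_lt continuous_const (by fun_prop)
    have hUn : U.Nonempty := by
      set L := ∑ i, (κ i : ℝ) * y i with hL
      have hr : 0 < |L| + 1 := by positivity
      refine ⟨(|L| + 1)⁻¹ • y, ?_, ?_⟩
      · simp only [Set.mem_iInter, Set.mem_ofPred_eq]
        intro j hj
        simp only [Pi.smul_apply, smul_eq_mul, mul_left_comm _ (|L| + 1)⁻¹, ← Finset.mul_sum]
        have := hy j hj
        positivity
      · simp only [Set.mem_ofPred_eq, Pi.smul_apply, smul_eq_mul, mul_left_comm _ (|L| + 1)⁻¹,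
          ← Finset.mul_sum]
        rw [← hL, inv_mul_eq_div, div_lt_one hr]
        linarith [le_abs_self L]
    refine (hUo.measure_pos volume hUn).trans_le (measure_mono ?_)
    rintro z ⟨hz1, hz2⟩
    refine ⟨fun j => ?_, hz2⟩
    by_cases h : (fun i => (g j i : ℝ)) = 0
    · have : ∀ i, (g j i : ℝ) = 0 := fun i => congrFun h i
      simp [this]
    · exact ((Set.mem_iInter.1 hz1 j) h).le
  rw [hq, ENNReal.ofReal_pos] at hpos
  refine ⟨k.factorial * q, mul_pos (by exact_mod_cast k.factorial_pos) (by exact_mod_cast hpos), ?_⟩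
  rw [integral_eq_lintegral_of_nonneg_ae (Filter.Eventually.of_forall fun _ => (Real.exp_pos _).le)
    (Measurable.aestronglyMeasurable (by fun_prop)), hC, XRat.cone_lintegral g κ h0, hq, ENNReal.toReal_mul,
    ENNReal.toReal_ofReal (by positivity), ENNReal.toReal_ofReal hpos.le]
  push_cast
  rfl
end
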